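/- arXiv:0911.5287 — 7 statements merged into one kernel-verified Lean document; each statement's English description precedes it below -/
import Mathlib

section
/- Presentation Theorem (group algebra case). Let k be a commutative ring, G a group, and σ : G × G → kˣ a two-cocycle. Let T = k⟨x₁,…,x_n⟩ be the free associative k-algebra on n generators, graded by G with each x_j homogeneous of degree g_j ∈ G. Let (p_i)_{i∈I} be a family of elements of T whose k-span is a G-graded k-submodule of T, let A = T/(p_i)_{i∈I} (a G-graded k-algebra), and let (B, φ) be a σ-twist of A. Define the k-linear map κ : T → T by κ(1) = σ(1,1)·1, κ(x_j) = x_j, and, for r ≥ 2, κ(x_{i₁}x_{i₂}⋯x_{i_r}) = σ(g_{i₁},g_{i₂})⁻¹·σ(g_{i₁}g_{i₂},g_{i₃})⁻¹ ⋯ σ(g_{i₁}g_{i₂}⋯g_{i_{r−1}},g_{i_r})⁻¹ · x_{i₁}x_{i₂}⋯x_{i_r}. Then there is a k-algebra isomorphism T/(κ(p_i))_{i∈I} ≅ B sending the class of x_j to φ(x̄_j), where x̄_j denotes the class of x_j in A. Moreover, if G is abelian and the relation x_i x_j = x_j x_i holds in A for some i ≠ j, then in B one has φ(x̄_i)·φ(x̄_j)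 = σ(g_i,g_j)·σ(g_j,g_i)⁻¹ · φ(x̄_j)·φ(x̄_i). -/
section

variable {k : Type*} [CommRing k] {G : Type*} [Group G] {n : ℕ}

/-- A two-cocycle on a group `G` with values in `kˣ`. -/
def IsTwoCocycle (σ : G → G → kˣ) : Prop :=
  ∀ g h l, σ g h * σ (g * h) l = σ h l * σ g (h * l)

/-- The monomial of the free algebra `k⟨x₁,…,x_n⟩` associated to a word. -/
def freeMonomial (k : Type*) [CommRing k] {n : ℕ} (w : List (Fin n)) :
    FreeAlgebra k (Fin n) :=
  (w.map (FreeAlgebra.ι k)).prod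

/-- The `G`-degree of a word, for generators of degrees `gdeg`. -/
def wordDeg (gdeg : Fin n → G) (w : List (Fin n)) : G := (w.map gdeg).prod

/-- The `G`-grading on the free algebra `k⟨x₁,…,x_n⟩` in which `x_j` is homogeneous
of degree `gdeg j`: the piece of degree `g` is spanned by the words of degree `g`. -/
def freeGrading (k : Type*) [CommRing k] (gdeg : Fin n → G) (g : G) :
    Submodule k (FreeAlgebra k (Fin n)) :=
  Submodule.span k {x | ∃ w : List (Fin n), wordDeg gdeg w = g ∧ x = freeMonomial k w}

/-- The scalar `σ(g, g_{j₁})⁻¹ · σ(g·g_{j₁}, g_{j₂})⁻¹ ⋯` by which the twisting map `κ`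
rescales the monomial `x_{i} x_{j₁} ⋯ x_{j_r}`, where `g` is the degree of `x_i`. -/
def kappaCoef (σ : G → G → kˣ) (gdeg : Fin n → G) : G → List (Fin n) → kˣ
  | _, [] => 1
  | g, j :: w => (σ g (gdeg j))⁻¹ * kappaCoef σ gdeg (g * gdeg j) w

/-- The relation on `k⟨x₁,…,x_n⟩` identifying each `p i` with `0`. -/
def presentationRel {I : Type*} (p : I → FreeAlgebra k (Fin n)) :
    FreeAlgebra k (Fin n) → FreeAlgebra k (Fin n) → Prop :=
  fun a b => (∃ i, a = p i) ∧ b = 0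


theorem freeMonomial_nil' : freeMonomial k ([] : List (Fin n)) = 1 := by
  simp [freeMonomial]

theorem freeMonomial_cons' (i : Fin n) (w : List (Fin n)) :
    freeMonomial k (i :: w) = FreeAlgebra.ι k i * freeMonomial k w := by
  simp [freeMonomial]

theorem freeMonomial_append' (u w : List (Fin n)) :
    freeMonomial k (u ++ w) = freeMonomial k u * freeMonomial k w := by
  simp [freeMonomial]

theorem freeMonomial_span' :
    Submodule.span k (Set.range (freeMonomial k : List (Fin n) → FreeAlgebra k (Fin n))) = ⊤ := by
  rw [Submodule.eq_top_iff']
  intro x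
  induction x using FreeAlgebra.induction with
  | grade0 r =>
    rw [Algebra.algebraMap_eq_smul_one]
    exact Submodule.smul_mem _ _ (Submodule.subset_span ⟨[], freeMonomial_nil'⟩)
  | grade1 i => exact Submodule.subset_span ⟨[i], by simp [freeMonomial]⟩
  | add a b ha hb => exact Submodule.add_mem _ ha hb
  | mul a b ha hb =>
    have h := Submodule.mul_mem_mul ha hb
    rw [Submodule.span_mul_span] at h
    refine Submodule.span_mono ?_ h
    rintro _ ⟨_, ⟨u, rfl⟩, _, ⟨w, rfl⟩, rfl⟩
    exact ⟨u ++ w, freeMonomial_append' u w⟩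

theorem sigma_one_left' {σ : G → G → kˣ} (hσ : IsTwoCocycle σ) (g : G) : σ 1 g = σ 1 1 := by
  have h := hσ 1 1 g
  simp only [one_mul, mul_one] at h
  rw [mul_comm (σ 1 g)] at h
  exact (mul_right_cancel h).symm

theorem sigma_one_right' {σ : G → G → kˣ} (hσ : IsTwoCocycle σ) (g : G) : σ g 1 = σ 1 1 := by
  have h := hσ g 1 1
  simp only [one_mul, mul_one] at h
  exact mul_right_cancel h

theorem kappaCoef_append' (σ : G → G → kˣ) (gdeg : Fin n → G) (u w : List (Fin n)) :
    ∀ g : G, kappaCoef σ gdeg g (u ++ w) =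
      kappaCoef σ gdeg g u * kappaCoef σ gdeg (g * wordDeg gdeg u) w := by
  induction u with
  | nil => intro g; simp [kappaCoef, wordDeg]
  | cons j u ih =>
    intro g
    simp only [List.cons_append, kappaCoef, ih, wordDeg, List.map_cons, List.prod_cons, mul_assoc]

theorem kappaCoef_shift' {σ : G → G → kˣ} (hσ : IsTwoCocycle σ) (gdeg : Fin n → G)
    (w : List (Fin n)) : ∀ g h : G, kappaCoef σ gdeg (g * h) w * σ g (h * wordDeg gdeg w) =
      kappaCoef σ gdeg h w * σ g h := by
  induction w with
  | nil => intro g h; simp [kappaCoef, wordDeg]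
  | cons j w ih =>
    intro g h
    have e := ih g (h * gdeg j)
    have c := hσ g h (gdeg j)
    simp only [kappaCoef, wordDeg, List.map_cons, List.prod_cons, mul_assoc] at e c ⊢
    rw [e]
    calc (σ (g * h) (gdeg j))⁻¹ * (kappaCoef σ gdeg (h * gdeg j) w * σ g (h * gdeg j))
        = (σ (g * h) (gdeg j))⁻¹ * (σ h (gdeg j))⁻¹ * kappaCoef σ gdeg (h * gdeg j) w *
            (σ h (gdeg j) * σ g (h * gdeg j)) := by
          rw [show ∀ a b c d : kˣ, a⁻¹ * b⁻¹ * c * (b * d) = a⁻¹ * (c * d) by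
            intro a b c d
            rw [mul_comm b d, ← mul_assoc, mul_right_comm _ c d, mul_right_comm _ b⁻¹ d]
            rw [mul_right_comm _ c b, inv_mul_cancel_right, mul_assoc, mul_comm d c]]
      _ = _ := by
          rw [← c]
          rw [show ∀ a b c d : kˣ, a⁻¹ * b⁻¹ * c * (d * a) = b⁻¹ * (c * d) by
            intro a b c d
            rw [mul_comm a⁻¹, ← mul_assoc, mul_right_comm _ a⁻¹ c, mul_right_comm _ a⁻¹ d,
              inv_mul_cancel_right, mul_assoc]]

/-- The uniform coefficient by which `κ` rescales a word. -/
def wordCoef (σ : G → G → kˣ) (gdeg : Fin n → G) (w : List (Fin n)) : kˣ :=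
  σ 1 1 * kappaCoef σ gdeg 1 w

theorem wordCoef_cons' {σ : G → G → kˣ} (hσ : IsTwoCocycle σ) (gdeg : Fin n → G)
    (i : Fin n) (w : List (Fin n)) :
    wordCoef σ gdeg (i :: w) = kappaCoef σ gdeg (gdeg i) w := by
  simp [wordCoef, kappaCoef, sigma_one_left' hσ (gdeg i)]

theorem wordCoef_append' {σ : G → G → kˣ} (hσ : IsTwoCocycle σ) (gdeg : Fin n → G)
    (u w : List (Fin n)) :
    wordCoef σ gdeg (u ++ w) * σ (wordDeg gdeg u) (wordDeg gdeg w) =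
      wordCoef σ gdeg u * wordCoef σ gdeg w := by
  have h := kappaCoef_shift' hσ gdeg w (wordDeg gdeg u) 1
  rw [sigma_one_right' hσ, mul_one, one_mul] at h
  rw [wordCoef, kappaCoef_append', one_mul, mul_assoc, mul_assoc, h, wordCoef, wordCoef]
  rw [mul_assoc, mul_comm (kappaCoef σ gdeg 1 w)]

theorem mkAlgHom_eq_zero' (r : FreeAlgebra k (Fin n) → FreeAlgebra k (Fin n) → Prop)
    {M : Type*} [AddCommGroup M] [Module k M] (L : FreeAlgebra k (Fin n) →ₗ[k] M)
    (hr : ∀ a b, r a b → ∀ u v, L (u * (a - b) * v) = 0)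
    (s : FreeAlgebra k (Fin n)) (hs : RingQuot.mkAlgHom k r s = 0) : L s = 0 := by
  let J : TwoSidedIdeal (FreeAlgebra k (Fin n)) := TwoSidedIdeal.mk'
    {t | ∀ u v, L (u * t * v) = 0}
    (by intro u v; simp)
    (by intro a b ha hb u v; simp [mul_add, add_mul, ha u v, hb u v])
    (by intro a ha u v; simp [ha u v])
    (by
      intro a b hb u v
      have := hb (u * a) v
      rwa [mul_assoc u a b] at this)
    (by
      intro a b ha u v
      have := ha u (b * v)
      rwa [← mul_assoc, mul_assoc u a b] at this)
  have hJ : ∀ t, t ∈ J ↔ ∀ u v, L (u * t * v) = 0 := by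
    intro t
    exact TwoSidedIdeal.mem_mk' _ _ _ _ _ _ t
  have hlift : ∀ ⦃a b⦄, r a b → J.ringCon.mk' a = J.ringCon.mk' b := by
    intro a b hab
    refine (RingCon.eq _).2 ?_
    rw [TwoSidedIdeal.rel_iff, hJ]
    exact hr a b hab
  have h1 : RingQuot.mkRingHom r s = 0 := by
    rw [← RingQuot.mkAlgHom_coe k r]
    exact hs
  have h2 := RingQuot.lift_mkRingHom_apply J.ringCon.mk' hlift s
  rw [h1, map_zero] at h2
  have h3 : J.ringCon s 0 := (RingCon.eq _).1 h2.symm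
  rw [TwoSidedIdeal.rel_iff, hJ] at h3
  simpa using h3 1 1

/-- Presentation Theorem, group algebra case.  Let `σ` be a two-cocycle
of a group `G` with values in `kˣ`, let `T = k⟨x₁,…,x_n⟩` be `G`-graded with `x_j`
homogeneous of degree `gdeg j`, let `(p i)` be a family of elements of `T` whose span
is a graded submodule, let `A = T/(p i)` with the induced grading, and let `(B, φ)` be
a `σ`-twist of `A`.  Let `κ : T → T` be the linear map multiplying each monomial by
the corresponding cocycle scalars.  Then `B` has the presentation `T/(κ(p i))`, via an
isomorphism sending the class of `x_j` to `φ(x̄_j)`.  Moreover, if `G` is abelian and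
`x_i`, `x_j` commute in `A`, then `φ(x̄_i)·φ(x̄_j) = b_σ(g_i,g_j)·φ(x̄_j)·φ(x̄_i)`. -/
theorem presentation_theorem_group_algebra_case
    (σ : G → G → kˣ) (hσ : IsTwoCocycle σ) (gdeg : Fin n → G)
    {I : Type*} (p : I → FreeAlgebra k (Fin n))
    -- the span of the `p i` is a `G`-graded submodule of `T`
    (hp : Submodule.span k (Set.range p) =
      ⨆ g : G, Submodule.span k (Set.range p) ⊓ freeGrading k gdeg g)
    -- the linear map `κ`
    (κ : FreeAlgebra k (Fin n) →ₗ[k] FreeAlgebra k (Fin n))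
    (hκ1 : κ 1 = ((σ 1 1 : kˣ) : k) • 1)
    (hκmon : ∀ (i : Fin n) (w : List (Fin n)),
      κ (freeMonomial k (i :: w)) =
        ((kappaCoef σ gdeg (gdeg i) w : kˣ) : k) • freeMonomial k (i :: w))
    -- the `σ`-twist `(B, φ)` of `A = T/(p i)`
    (B : Type*) [Ring B] [Algebra k B]
    (φ : RingQuot (presentationRel p) ≃ₗ[k] B)
    (hφ : ∀ (g h : G) (a b : RingQuot (presentationRel p)),
      a ∈ Submodule.map (RingQuot.mkAlgHom k (presentationRel p)).toLinearMap
            (freeGrading k gdeg g) →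
      b ∈ Submodule.map (RingQuot.mkAlgHom k (presentationRel p)).toLinearMap
            (freeGrading k gdeg h) →
      φ a * φ b = ((σ g h : kˣ) : k) • φ (a * b)) :
    (∃ ψ : RingQuot (presentationRel (fun i => κ (p i))) ≃ₐ[k] B,
      ∀ j : Fin n,
        ψ (RingQuot.mkAlgHom k (presentationRel (fun i => κ (p i))) (FreeAlgebra.ι k j)) =
          φ (RingQuot.mkAlgHom k (presentationRel p) (FreeAlgebra.ι k j))) ∧
    (∀ i j : Fin n, i ≠ j → (∀ a b : G, a * b = b * a) →
      RingQuot.mkAlgHom k (presentationRel p) (FreeAlgebra.ι k i) *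
          RingQuot.mkAlgHom k (presentationRel p) (FreeAlgebra.ι k j) =
        RingQuot.mkAlgHom k (presentationRel p) (FreeAlgebra.ι k j) *
          RingQuot.mkAlgHom k (presentationRel p) (FreeAlgebra.ι k i) →
      φ (RingQuot.mkAlgHom k (presentationRel p) (FreeAlgebra.ι k i)) *
          φ (RingQuot.mkAlgHom k (presentationRel p) (FreeAlgebra.ι k j)) =
        ((σ (gdeg i) (gdeg j) * (σ (gdeg j) (gdeg i))⁻¹ : kˣ) : k) •
          (φ (RingQuot.mkAlgHom k (presentationRel p) (FreeAlgebra.ι k j)) *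
            φ (RingQuot.mkAlgHom k (presentationRel p) (FreeAlgebra.ι k i)))) := by
  set q := RingQuot.mkAlgHom k (presentationRel p) with hq
  set q' := RingQuot.mkAlgHom k (presentationRel (fun i => κ (p i))) with hq'
  have hmem : ∀ w, freeMonomial k w ∈ freeGrading k gdeg (wordDeg gdeg w) := fun w =>
    Submodule.subset_span ⟨w, rfl, rfl⟩
  have hmem' : ∀ w, q (freeMonomial k w) ∈
      Submodule.map q.toLinearMap (freeGrading k gdeg (wordDeg gdeg w)) := fun w =>
    Submodule.mem_map_of_mem (f := q.toLinearMap) (hmem w)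
  have hι : ∀ j : Fin n, FreeAlgebra.ι k j = freeMonomial k [j] := fun j => by simp [freeMonomial]
  have hd1 : ∀ j, wordDeg gdeg [j] = gdeg j := fun j => by simp [wordDeg]
  have hmemι : ∀ j, q (FreeAlgebra.ι k j) ∈
      Submodule.map q.toLinearMap (freeGrading k gdeg (gdeg j)) := fun j => by
    have := hmem' [j]
    rwa [← hι, hd1] at this
  refine ⟨?_, ?_⟩
  · -- action of `κ` on words
    have hκ : ∀ w, κ (freeMonomial k w) =
        ((wordCoef σ gdeg w : kˣ) : k) • freeMonomial k w := by
      intro w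
      cases w with
      | nil => simp [freeMonomial_nil', hκ1, wordCoef, kappaCoef]
      | cons i w => rw [hκmon, wordCoef_cons' hσ]
    have hqsurj : Function.Surjective q := RingQuot.mkAlgHom_surjective k (presentationRel p)
    -- the unit of `B`
    have hone : φ 1 = ((σ 1 1 : kˣ) : k) • (1 : B) := by
      have key : ∀ t, φ 1 * φ (q t) = ((σ 1 1 : kˣ) : k) • φ (q t) := by
        intro t
        have ht : t ∈ Submodule.span k (Set.range (freeMonomial k : List (Fin n) → _)) := by
          rw [freeMonomial_span']; trivial
        induction ht using Submodule.span_induction with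
        | mem x hx =>
          obtain ⟨w, rfl⟩ := hx
          have h1 := hmem' []
          rw [freeMonomial_nil', map_one] at h1
          rw [hφ _ _ _ _ h1 (hmem' w)]
          simp [wordDeg, sigma_one_left' hσ]
        | zero => simp
        | add x y _ _ hx hy => simp [mul_add, hx, hy]
        | smul a x _ hx => simp [hx, smul_comm a]
      obtain ⟨t, ht⟩ := hqsurj (φ.symm 1)
      have := key t
      rw [ht] at this
      simpa using this
    let π : FreeAlgebra k (Fin n) →ₐ[k] B :=
      FreeAlgebra.lift k (fun j => φ (q (FreeAlgebra.ι k j)))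
    have hπι : ∀ j, π (FreeAlgebra.ι k j) = φ (q (FreeAlgebra.ι k j)) := fun j => by simp [π]
    have hπmon : ∀ w, ((wordCoef σ gdeg w : kˣ) : k) • π (freeMonomial k w) =
        φ (q (freeMonomial k w)) := by
      intro w
      induction w with
      | nil => simp [freeMonomial_nil', hone, wordCoef, kappaCoef]
      | cons i w ih =>
        have hc := wordCoef_append' hσ gdeg [i] w
        rw [wordCoef_cons' hσ, kappaCoef, one_mul, hd1, List.singleton_append] at hc
        have h1 := hφ _ _ _ _ (hmemι i) (hmem' w)
        rw [← ih, ← map_mul, ← freeMonomial_cons', ← hπι, mul_smul_comm, ← map_mul,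
          ← freeMonomial_cons', ← hc, Units.val_mul, mul_comm, mul_smul] at h1
        have h2 := congrArg (fun z => (((σ (gdeg i) (wordDeg gdeg w))⁻¹ : kˣ) : k) • z) h1
        simpa only [smul_smul, ← Units.val_mul, inv_mul_cancel_left, inv_mul_cancel,
          Units.val_one, one_smul, ← mul_smul] using h2
    have hπκ : ∀ t, π (κ t) = φ (q t) := by
      intro t
      have ht : t ∈ Submodule.span k (Set.range (freeMonomial k : List (Fin n) → _)) := by
        rw [freeMonomial_span']; trivial
      induction ht using Submodule.span_induction with
      | mem x hx =>
        obtain ⟨w, rfl⟩ := hx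
        rw [hκ, map_smul, hπmon]
      | zero => simp
      | add x y _ _ hx hy => simp [hx, hy]
      | smul a x _ hx => simp [hx]
    have hκsurj : Function.Surjective κ := by
      rw [← LinearMap.range_eq_top, ← top_le_iff, ← freeMonomial_span', Submodule.span_le]
      rintro _ ⟨w, rfl⟩
      refine ⟨(((wordCoef σ gdeg w)⁻¹ : kˣ) : k) • freeMonomial k w, ?_⟩
      rw [map_smul, hκ, smul_smul, Units.inv_mul, one_smul]
    -- multiplicativity of `κ` up to scalars
    have hκmul : ∀ (u : List (Fin n)) (g : G) (t : FreeAlgebra k (Fin n)),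
        t ∈ freeGrading k gdeg g →
        ∀ w, ∃ c : k, κ (freeMonomial k u * t * freeMonomial k w) =
          c • (κ (freeMonomial k u) * κ t * κ (freeMonomial k w)) := by
      intro u g t ht w
      refine ⟨(((σ (wordDeg gdeg u) g * σ (wordDeg gdeg u * g) (wordDeg gdeg w))⁻¹ : kˣ) : k), ?_⟩
      unfold freeGrading at ht
      induction ht using Submodule.span_induction with
      | mem x hx =>
        obtain ⟨v, hv, rfl⟩ := hx
        have h1 := wordCoef_append' hσ gdeg u v
        have h2 := wordCoef_append' hσ gdeg (u ++ v) w
        have h3 : wordDeg gdeg (u ++ v) = wordDeg gdeg u * g := by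
          rw [← hv]; simp [wordDeg]
        rw [h3] at h2
        rw [hv] at h1
        rw [← freeMonomial_append', ← freeMonomial_append', hκ, hκ, hκ, hκ]
        simp only [smul_mul_assoc, mul_smul_comm, smul_smul, ← freeMonomial_append',
          ← Units.val_mul]
        congr 2
        rw [eq_inv_mul_iff_mul_eq]
        calc _ = (wordCoef σ gdeg (u ++ v ++ w) * σ (wordDeg gdeg u * g) (wordDeg gdeg w)) *
              σ (wordDeg gdeg u) g := by ac_rfl
          _ = (wordCoef σ gdeg (u ++ v) * σ (wordDeg gdeg u) g) * wordCoef σ gdeg w := by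
            rw [h2]; ac_rfl
          _ = _ := by rw [h1]; ac_rfl
      | zero => simp
      | add x y _ _ hx hy => simp [mul_add, add_mul, hx, hy]
      | smul a x _ hx => simp only [mul_smul_comm, smul_mul_assoc, map_smul, hx]; rw [smul_comm]
    let L : FreeAlgebra k (Fin n) →ₗ[k] RingQuot (presentationRel (fun i => κ (p i))) := q'.toLinearMap ∘ₗ κ
    have hL : ∀ t, L t = q' (κ t) := fun t => rfl
    have hLspan : ∀ t ∈ Submodule.span k (Set.range p), L t = 0 := by
      intro t ht
      have : Submodule.span k (Set.range p) ≤ LinearMap.ker L := by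
        rw [Submodule.span_le]
        rintro _ ⟨i, rfl⟩
        have := RingQuot.mkAlgHom_rel k (s := presentationRel (fun i => κ (p i))) (x := κ (p i)) (y := 0) ⟨⟨i, rfl⟩, rfl⟩
        rw [map_zero] at this
        exact this
      exact this ht
    have hLmon : ∀ u w, ∀ t ∈ Submodule.span k (Set.range p),
        L (freeMonomial k u * t * freeMonomial k w) = 0 := by
      intro u w t ht
      rw [hp] at ht
      induction ht using Submodule.iSup_induction' with
      | mem g x hx =>
        obtain ⟨c, hc⟩ := hκmul u g x hx.2 w
        have := hLspan x hx.1
        rw [hL] at this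
        rw [hL, hc, map_smul, map_mul, map_mul, this]
        simp
      | zero => simp
      | add x y _ _ hx hy => simp only [mul_add, add_mul, map_add, hx, hy, add_zero]
    have hLall : ∀ t ∈ Submodule.span k (Set.range p), ∀ u v, L (u * t * v) = 0 := by
      intro t ht u v
      have hu : u ∈ Submodule.span k (Set.range (freeMonomial k : List (Fin n) → _)) := by
        rw [freeMonomial_span']; trivial
      have hv : v ∈ Submodule.span k (Set.range (freeMonomial k : List (Fin n) → _)) := by
        rw [freeMonomial_span']; trivial
      induction hu using Submodule.span_induction with
      | mem x hx =>
        obtain ⟨a, rfl⟩ := hx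
        induction hv using Submodule.span_induction with
        | mem x hx =>
          obtain ⟨b, rfl⟩ := hx
          exact hLmon a b t ht
        | zero => simp
        | add x y _ _ hx hy => simp only [mul_add, map_add, hx, hy, add_zero]
        | smul a x _ hx => simp only [mul_smul_comm, map_smul, hx, smul_zero]
      | zero => simp
      | add x y _ _ hx hy => simp only [add_mul, map_add, hx, hy, add_zero]
      | smul a x _ hx => simp only [smul_mul_assoc, map_smul, hx, smul_zero]
    have hker : ∀ s, q s = 0 → L s = 0 := by
      intro s hs
      refine mkAlgHom_eq_zero' (presentationRel p) L ?_ s hs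
      rintro a b ⟨⟨i, rfl⟩, rfl⟩ u v
      rw [sub_zero]
      exact hLall _ (Submodule.subset_span ⟨i, rfl⟩) u v
    have hrel : ∀ ⦃a b⦄, presentationRel (fun i => κ (p i)) a b → π a = π b := by
      rintro a b ⟨⟨i, rfl⟩, rfl⟩
      have : q (p i) = 0 := by
        have := RingQuot.mkAlgHom_rel k (s := presentationRel p) (x := p i) (y := 0) ⟨⟨i, rfl⟩, rfl⟩
        rwa [map_zero] at this
      rw [hπκ, this, map_zero, map_zero]
    let ψ : RingQuot (presentationRel (fun i => κ (p i))) →ₐ[k] B := RingQuot.liftAlgHom k ⟨π, hrel⟩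
    have hψ : ∀ t, ψ (q' t) = π t := fun t => RingQuot.liftAlgHom_mkAlgHom_apply k π hrel t
    have hbij : Function.Bijective ψ := by
      constructor
      · rw [injective_iff_map_eq_zero]
        intro x hx
        obtain ⟨t, rfl⟩ := RingQuot.mkAlgHom_surjective k (presentationRel (fun i => κ (p i))) x
        obtain ⟨s, rfl⟩ := hκsurj t
        have hx' : ψ (q' (κ s)) = 0 := hx
        rw [hψ, hπκ, map_eq_zero_iff φ φ.injective] at hx'
        exact hker s hx'
      · intro b
        obtain ⟨t, ht⟩ := hqsurj (φ.symm b)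
        refine ⟨q' (κ t), ?_⟩
        rw [hψ, hπκ, ht, LinearEquiv.apply_symm_apply]
    refine ⟨AlgEquiv.ofBijective ψ hbij, fun j => ?_⟩
    rw [AlgEquiv.coe_ofBijective, hψ, hπι]
  · intro i j _ _ hcomm
    rw [hφ _ _ _ _ (hmemι i) (hmemι j), hφ _ _ _ _ (hmemι j) (hmemι i), hcomm, smul_smul,
      ← Units.val_mul, inv_mul_cancel_right]


end
end

section
/- Real points of SL_F(2). Let S = {(x,y,z,t) ∈ ℝ⁴ : yz = 0, yt = 0, zt = 0, and x² + y² + z² − t² = 1}. Let C₁ = {(x,y,0,0) ∈ ℝ⁴ : x² + y² = 1}, C₂ = {(x,0,z,0) ∈ ℝ⁴ : x² + z² = 1}, and H = {(x,0,0,t) ∈ ℝ⁴ : x² − t² = 1}. Then S = C₁ ∪ C₂ ∪ H (two circles and a hyperbola), and the pairwise intersections satisfy C₁ ∩ C₂ = C₁ ∩ H = C₂ ∩ H = {(1,0,0,0), (−1,0,0,0)}. -/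
/-- The set of real points of `SL_F(2)`. -/
def SLF2R : Set (ℝ × ℝ × ℝ × ℝ) :=
  {p | p.2.1 * p.2.2.1 = 0 ∧ p.2.1 * p.2.2.2 = 0 ∧ p.2.2.1 * p.2.2.2 = 0 ∧
    p.1 ^ 2 + p.2.1 ^ 2 + p.2.2.1 ^ 2 - p.2.2.2 ^ 2 = 1}

/-- The circle `C₁ = {(x,y,0,0) : x² + y² = 1}`. -/
def circleC1 : Set (ℝ × ℝ × ℝ × ℝ) :=
  {p | p.2.2.1 = 0 ∧ p.2.2.2 = 0 ∧ p.1 ^ 2 + p.2.1 ^ 2 = 1}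

/-- The circle `C₂ = {(x,0,z,0) : x² + z² = 1}`. -/
def circleC2 : Set (ℝ × ℝ × ℝ × ℝ) :=
  {p | p.2.1 = 0 ∧ p.2.2.2 = 0 ∧ p.1 ^ 2 + p.2.2.1 ^ 2 = 1}

/-- The hyperbola `H = {(x,0,0,t) : x² − t² = 1}`. -/
def hyperbolaH : Set (ℝ × ℝ × ℝ × ℝ) :=
  {p | p.2.1 = 0 ∧ p.2.2.1 = 0 ∧ p.1 ^ 2 - p.2.2.2 ^ 2 = 1}

/-- The real points of `SL_F(2)` consist of two circles and a hyperbola, all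
intersecting in the two points `(±1, 0, 0, 0)`. -/
theorem SLF2R_eq_union_and_inter :
    SLF2R = circleC1 ∪ circleC2 ∪ hyperbolaH ∧
    circleC1 ∩ circleC2 = {((1 : ℝ), (0 : ℝ), (0 : ℝ), (0 : ℝ)), ((-1 : ℝ), (0 : ℝ), (0 : ℝ), (0 : ℝ))} ∧
    circleC1 ∩ hyperbolaH = {((1 : ℝ), (0 : ℝ), (0 : ℝ), (0 : ℝ)), ((-1 : ℝ), (0 : ℝ), (0 : ℝ), (0 : ℝ))} ∧
    circleC2 ∩ hyperbolaH = {((1 : ℝ), (0 : ℝ), (0 : ℝ), (0 : ℝ)), ((-1 : ℝ), (0 : ℝ), (0 : ℝ), (0 : ℝ))} := by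
  have key : ∀ x : ℝ, x ^ 2 = 1 ↔ x = 1 ∨ x = -1 := fun x => by
    constructor
    · intro h
      have h2 : (x - 1) * (x + 1) = 0 := by linarith [h, sq x, (by ring : (x - 1) * (x + 1) = x ^ 2 - 1)]
      rcases mul_eq_zero.mp h2 with h | h
      · left; linarith
      · right; linarith
    · rintro (rfl | rfl) <;> norm_num
  refine ⟨?_, ?_, ?_, ?_⟩
  · ext ⟨x, y, z, t⟩
    simp only [SLF2R, circleC1, circleC2, hyperbolaH, Set.mem_union, Set.mem_setOf_eq]
    constructor
    · rintro ⟨h1, h2, h3, h4⟩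
      by_cases hy : y = 0
      · subst hy
        rcases mul_eq_zero.mp h3 with rfl | rfl
        · right; exact ⟨rfl, rfl, by linarith⟩
        · left; right; exact ⟨rfl, rfl, by linarith⟩
      · have hz : z = 0 := (mul_eq_zero.mp h1).resolve_left hy
        have ht : t = 0 := (mul_eq_zero.mp h2).resolve_left hy
        subst hz ht
        left; left; exact ⟨rfl, rfl, by linarith⟩
    · rintro ((⟨rfl, rfl, h⟩ | ⟨rfl, rfl, h⟩) | ⟨rfl, rfl, h⟩) <;>
        exact ⟨by ring, by ring, by ring, by linarith⟩
  all_goals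
    ext ⟨x, y, z, t⟩
    simp only [circleC1, circleC2, hyperbolaH, Set.mem_inter_iff, Set.mem_setOf_eq,
      Set.mem_insert_iff, Set.mem_singleton_iff, Prod.mk.injEq]
    constructor
    · rintro ⟨⟨h1, h2, h3⟩, h4, h5, h6⟩
      subst_vars
      have hx : x ^ 2 = 1 := by linarith
      rcases (key x).mp hx with h | h <;> simp [h]
    · rintro (⟨rfl, rfl, rfl, rfl⟩ | ⟨rfl, rfl, rfl, rfl⟩) <;> norm_num
end

section
/- Let V be a U-module, v ∈ V, and λ ∈ ℂ with Z·v = λ·v. Then Z·(X·v) = (2 − λ)·(X·v) and Z·(Y·v) = (−2 − λ)·(Y·v). If moreover X²·v = a·v for some scalar a ∈ ℂ, then X²·(Y·v) = (a − 2λ − 2)·(Y·v). -/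
/-- in any module over the twisted enveloping algebra
`U = ℂ⟨X,Y,Z⟩/(XZ+ZX−2X, YZ+ZY+2Y, X²−Y²−Z)`, the operators `X` and `Y` shift
`Z`-eigenvectors, and `Y` shifts simultaneous `(Z, X²)`-eigenvectors. -/
theorem UF_eigenvector_shift
    {V : Type*} [AddCommGroup V] [Module ℂ V]
    (X Y Z : Module.End ℂ V)
    (hXZ : X * Z + Z * X = (2 : ℂ) • X)
    (hYZ : Y * Z + Z * Y = (-2 : ℂ) • Y)
    (hXYZ : X * X - Y * Y = Z)
    (v : V) (lam : ℂ) (hv : Z v = lam • v) :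
    Z (X v) = (2 - lam) • (X v) ∧
    Z (Y v) = (-2 - lam) • (Y v) ∧
    ∀ a : ℂ, (X * X) v = a • v → (X * X) (Y v) = (a - 2 * lam - 2) • (Y v) := by
  have h1 := LinearMap.congr_fun hXZ v
  have h2 := LinearMap.congr_fun hYZ v
  have h3 := LinearMap.congr_fun hXYZ v
  have h4 := LinearMap.congr_fun hXYZ (Y v)
  simp only [LinearMap.add_apply, LinearMap.sub_apply, LinearMap.smul_apply,
    Module.End.mul_apply, hv, map_smul] at h1 h2 h3 h4
  have hY : Z (Y v) = (-2 - lam) • (Y v) := by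
    rw [sub_smul, ← h2]; abel
  refine ⟨?_, hY, ?_⟩
  · rw [sub_smul, ← h1]; abel
  · intro a ha
    simp only [Module.End.mul_apply] at ha ⊢
    have h5 : Y (Y v) = (a - lam) • v := by
      rw [sub_smul, ← ha, ← h3]; abel
    rw [h5, hY, map_smul] at h4
    rw [sub_eq_iff_eq_add.mp h4]
    module
end

section
/- Let V be a non-zero finite-dimensional simple U-module. Then every eigenvalue of the operator Z on V has multiplicity one: for each λ ∈ ℂ, the eigenspace ker(Z − λ·id) ⊆ V has dimension at most 1. -/
/-- The alternating chain `v, Y v, X Y v, Y X Y v, …`. -/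
noncomputable def ufChain {V : Type*} [AddCommGroup V] [Module ℂ V]
    (X Y : Module.End ℂ V) (v : V) : ℕ → V
  | 0 => v
  | n + 1 => if Even n then Y (ufChain X Y v n) else X (ufChain X Y v n)

/-- The conclusion when some `Z`-eigenvector is also an `X`-eigenvector and its weight is not
a negative odd integer. -/
theorem uf_core {V : Type*} [AddCommGroup V] [Module ℂ V]
    (X Y Z : Module.End ℂ V)
    (hXZ : ∀ x, X (Z x) + Z (X x) = (2 : ℂ) • X x)
    (hYZ : ∀ x, Y (Z x) + Z (Y x) = (-2 : ℂ) • Y x)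
    (hXYZ : ∀ x, X (X x) - Y (Y x) = Z x)
    (hsimple : ∀ W : Submodule ℂ V, (∀ w ∈ W, X w ∈ W) → (∀ w ∈ W, Y w ∈ W) →
      (∀ w ∈ W, Z w ∈ W) → W = ⊥ ∨ W = ⊤)
    (v : V) (hv : v ≠ 0) (l b : ℂ) (hZ : Z v = l • v) (hX : X v = b • v)
    (hl : ∀ k : ℕ, l ≠ -(2 * k + 1)) :
    ∀ lam : ℂ, Module.finrank ℂ (Module.End.eigenspace Z lam) ≤ 1 := by
  intro lam
  set q := ufChain X Y v with hq
  have q0 : q 0 = v := rfl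
  have qe : ∀ n, Even n → q (n + 1) = Y (q n) := by
    intro n hn; simp [hq, ufChain, hn]
  have qo : ∀ n, ¬ Even n → q (n + 1) = X (q n) := by
    intro n hn; simp only [hq, ufChain, hn, if_false]
  have key : ∀ n, Z (q n) = ((-1) ^ n * (l + 2 * n)) • q n ∧
      (∃ a : ℂ, X (X (q n)) = a • q n) ∧ (∃ a : ℂ, Y (Y (q n)) = a • q n) := by
    intro n
    induction n with
    | zero =>
      refine ⟨by simp [q0, hZ], ⟨b * b, by simp [q0, hX, mul_smul]⟩, ⟨b * b - l, ?_⟩⟩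
      have := hXYZ v
      rw [hX, map_smul, hX, hZ] at this
      rw [q0, sub_smul, ← this, mul_smul]; abel
    | succ n ih =>
      obtain ⟨h1, ⟨a, ha⟩, ⟨c, hc⟩⟩ := ih
      by_cases hn : Even n
      · rw [qe n hn]
        have hz : Z (Y (q n)) = ((-1) ^ (n+1) * (l + 2 * ((n + 1 : ℕ) : ℂ))) • Y (q n) := by
          have := hYZ (q n)
          rw [h1, map_smul, hn.neg_one_pow] at this
          rw [pow_succ, hn.neg_one_pow, eq_sub_of_add_eq' this, ← sub_smul]
          congr 1; push_cast; ring
        refine ⟨hz, ?_, c, by rw [hc, map_smul]⟩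
        have := hXYZ (Y (q n))
        rw [hc, map_smul, hz] at this
        exact ⟨_, by rw [eq_add_of_sub_eq this, ← add_smul]⟩
      · rw [qo n hn]
        have ho := Nat.not_even_iff_odd.mp hn
        have hz : Z (X (q n)) = ((-1) ^ (n+1) * (l + 2 * ((n + 1 : ℕ) : ℂ))) • X (q n) := by
          have := hXZ (q n)
          rw [h1, map_smul, ho.neg_one_pow] at this
          rw [pow_succ, ho.neg_one_pow, eq_sub_of_add_eq' this, ← sub_smul]
          congr 1; push_cast; ring
        refine ⟨hz, ⟨a, by rw [ha, map_smul]⟩, ?_⟩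
        have := hXYZ (X (q n))
        rw [ha, map_smul, hz] at this
        refine ⟨a - (-1) ^ (n+1) * (l + 2 * ((n + 1 : ℕ) : ℂ)), ?_⟩
        rw [sub_smul, ← this]; abel
  have mem : ∀ n, q n ∈ Submodule.span ℂ (Set.range q) :=
    fun n => Submodule.subset_span ⟨n, rfl⟩
  have inv : ∀ T : Module.End ℂ V, (∀ n, T (q n) ∈ Submodule.span ℂ (Set.range q)) →
      ∀ w ∈ Submodule.span ℂ (Set.range q), T w ∈ Submodule.span ℂ (Set.range q) := by
    intro T hT w hw
    have : Submodule.span ℂ (Set.range q) ≤ (Submodule.span ℂ (Set.range q)).comap T := by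
      rw [Submodule.span_le]
      rintro _ ⟨n, rfl⟩
      exact hT n
    exact this hw
  have top : Submodule.span ℂ (Set.range q) = ⊤ := by
    refine (hsimple _ (inv X ?_) (inv Y ?_) (inv Z ?_)).resolve_left ?_
    · intro n
      by_cases hn : Even n
      · rcases n with _ | n
        · rw [q0, hX]; exact Submodule.smul_mem _ _ (mem 0)
        · rw [qo n (by rwa [Nat.even_add_one] at hn)]
          obtain ⟨a, ha⟩ := (key n).2.1
          rw [ha]; exact Submodule.smul_mem _ _ (mem n)
      · rw [← qo n hn]; exact mem _
    · intro n
      by_cases hn : Even n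
      · rw [← qe n hn]; exact mem _
      · rcases n with _ | n
        · simp at hn
        · rw [qe n (by rwa [Nat.even_add_one, not_not] at hn)]
          obtain ⟨a, ha⟩ := (key n).2.2
          rw [ha]; exact Submodule.smul_mem _ _ (mem n)
    · intro n
      rw [(key n).1]; exact Submodule.smul_mem _ _ (mem n)
    · intro h
      have := mem 0
      rw [h, Submodule.mem_bot] at this
      exact hv this
  have inj : ∀ n m : ℕ, ((-1 : ℂ) ^ n * (l + 2 * n)) = ((-1) ^ m * (l + 2 * m)) → n = m := by
    have odd_case : ∀ n m : ℕ, Even n → Odd m → l + 2 * (n : ℂ) = -(l + 2 * m) → False := by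
      intro n m hn hm h
      obtain ⟨k, hk⟩ := hn.add_odd hm
      refine hl k ?_
      have hk' : (n : ℂ) + m = 2 * k + 1 := by exact_mod_cast hk
      linear_combination h / 2 - hk'
    intro n m h
    rcases Nat.even_or_odd n with hn | hn <;> rcases Nat.even_or_odd m with hm | hm <;>
      rw [hn.neg_one_pow, hm.neg_one_pow] at h
    · have : (n : ℂ) = m := by linear_combination h / 2
      exact_mod_cast this
    · exact (odd_case n m hn hm (by linear_combination h)).elim
    · exact (odd_case m n hm hn (by linear_combination -h)).elim
    · have : (n : ℂ) = m := by linear_combination -h / 2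
      exact_mod_cast this
  obtain ⟨u, huE, hu⟩ : ∃ u : V, u ∈ Module.End.eigenspace Z lam ∧
      ∀ n : ℕ, ((-1 : ℂ) ^ n * (l + 2 * n)) = lam → q n = u := by
    by_cases h : ∃ n : ℕ, ((-1 : ℂ) ^ n * (l + 2 * n)) = lam
    · obtain ⟨n, hn⟩ := h
      refine ⟨q n, ?_, fun m hm => by rw [inj m n (hm.trans hn.symm)]⟩
      rw [Module.End.mem_eigenspace_iff, (key n).1, hn]
    · exact ⟨0, Submodule.zero_mem _, fun n hn => (h ⟨n, hn⟩).elim⟩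
  have hle : Module.End.eigenspace Z lam ≤ Submodule.span ℂ {u} := by
    intro w hw
    have hall : Submodule.span ℂ (Set.range q) ≤
        Submodule.span ℂ {u} ⊔ ⨆ j, ⨆ (_ : j ≠ lam), Module.End.eigenspace Z j := by
      rw [Submodule.span_le]
      rintro _ ⟨n, rfl⟩
      by_cases hn : ((-1 : ℂ) ^ n * (l + 2 * n)) = lam
      · rw [hu n hn]
        exact Submodule.mem_sup_left (Submodule.mem_span_singleton_self u)
      · refine Submodule.mem_sup_right ?_
        refine Submodule.mem_iSup_of_mem _ (Submodule.mem_iSup_of_mem hn ?_)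
        rw [Module.End.mem_eigenspace_iff]; exact (key n).1
    have hwt : w ∈ Submodule.span ℂ (Set.range q) := by rw [top]; trivial
    obtain ⟨y, hy, z, hz, hyz⟩ := Submodule.mem_sup.mp (hall hwt)
    have hyE : y ∈ Module.End.eigenspace Z lam :=
      (Submodule.span_le.mpr (by simpa using huE)) hy
    have hzE : z ∈ Module.End.eigenspace Z lam := by
      have : z = w - y := by rw [← hyz]; abel
      rw [this]; exact Submodule.sub_mem _ hw hyE
    have hz0 : z = 0 :=
      Submodule.disjoint_def.mp (Module.End.eigenspaces_iSupIndep Z lam) z hzE hz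
    rw [← hyz, hz0, add_zero]; exact hy
  have : Module.finrank ℂ (Submodule.span ℂ {u}) ≤ 1 := by
    simpa using finrank_span_le_card (R := ℂ) ({u} : Set V)
  exact (Submodule.finrank_mono hle).trans this

/-- The conclusion when `Z` has a positive odd eigenvalue of minimal absolute value. -/
theorem uf_odd {V : Type*} [AddCommGroup V] [Module ℂ V] [FiniteDimensional ℂ V]
    (X Y Z : Module.End ℂ V)
    (hXZ : ∀ x, X (Z x) + Z (X x) = (2 : ℂ) • X x)
    (hYZ : ∀ x, Y (Z x) + Z (Y x) = (-2 : ℂ) • Y x)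
    (hXYZ : ∀ x, X (X x) - Y (Y x) = Z x)
    (hsimple : ∀ W : Submodule ℂ V, (∀ w ∈ W, X w ∈ W) → (∀ w ∈ W, Y w ∈ W) →
      (∀ w ∈ W, Z w ∈ W) → W = ⊥ ∨ W = ⊤)
    (k : ℕ) (v : V) (hv : v ≠ 0) (hZ : Z v = (2 * k + 1 : ℂ) • v)
    (hmin : ∀ j : ℕ, j < k → ∀ w, Z w = (-(2 * j + 1) : ℂ) • w → w = 0) :
    ∀ lam : ℂ, Module.finrank ℂ (Module.End.eigenspace Z lam) ≤ 1 := by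
  have hne : ∀ j : ℕ, (2 * k + 1 : ℂ) ≠ -(2 * j + 1) := by
    intro j h
    have : (2 * k + 1 + (2 * j + 1) : ℂ) = 0 := by rw [h]; ring
    have h2 : (2 * k + 1 + (2 * j + 1) : ℕ) = 0 := by exact_mod_cast this
    omega
  rcases k with _ | k
  · have hpres : ∀ w ∈ Module.End.eigenspace Z 1, X w ∈ Module.End.eigenspace Z 1 := by
      intro w hw
      rw [Module.End.mem_eigenspace_iff] at hw ⊢
      have := hXZ w
      rw [hw, one_smul] at this
      rw [eq_sub_of_add_eq' this, two_smul, one_smul]; abel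
    have hvE : v ∈ Module.End.eigenspace Z 1 := by
      rw [Module.End.mem_eigenspace_iff, hZ]; simp
    haveI : Nontrivial (Module.End.eigenspace Z 1) :=
      ⟨⟨v, hvE⟩, 0, fun h => hv (congrArg Subtype.val h)⟩
    obtain ⟨b, hb⟩ := Module.End.exists_eigenvalue (X.restrict hpres)
    obtain ⟨u, hu⟩ := hb.exists_hasEigenvector
    have hu1 := hu.apply_eq_smul
    have hu1' : X (u : V) = b • (u : V) := congrArg Subtype.val hu1
    have hu2 : (u : V) ≠ 0 := fun h => hu.2 (Subtype.ext h)
    have hu3 := Module.End.mem_eigenspace_iff.mp u.2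
    refine uf_core X Y Z hXZ hYZ hXYZ hsimple u hu2 _ b hu3 hu1' ?_
    simpa using hne
  · have hX0 : X v = 0 := by
      refine hmin k (Nat.lt_succ_self k) _ ?_
      have := hXZ v
      rw [hZ, map_smul] at this
      rw [eq_sub_of_add_eq' this, ← sub_smul]
      congr 1; push_cast; ring
    exact uf_core X Y Z hXZ hYZ hXYZ hsimple v hv _ 0 hZ (by rw [hX0, zero_smul]) hne

/-- on a non-zero finite-dimensional simple module over
`U = ℂ⟨X,Y,Z⟩/(XZ+ZX−2X, YZ+ZY+2Y, X²−Y²−Z)`, every eigenvalue of `Z` has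
multiplicity one. -/
theorem UF_eigenvalues_multiplicity_one
    {V : Type*} [AddCommGroup V] [Module ℂ V] [FiniteDimensional ℂ V] [Nontrivial V]
    (X Y Z : Module.End ℂ V)
    (hXZ : X * Z + Z * X = (2 : ℂ) • X)
    (hYZ : Y * Z + Z * Y = (-2 : ℂ) • Y)
    (hXYZ : X * X - Y * Y = Z)
    (hsimple : ∀ W : Submodule ℂ V, (∀ w ∈ W, X w ∈ W) → (∀ w ∈ W, Y w ∈ W) →
      (∀ w ∈ W, Z w ∈ W) → W = ⊥ ∨ W = ⊤) :
    ∀ lam : ℂ, Module.finrank ℂ (Module.End.eigenspace Z lam) ≤ 1 := by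
  have h1 : ∀ x, X (Z x) + Z (X x) = (2 : ℂ) • X x := fun x => LinearMap.congr_fun hXZ x
  have h2 : ∀ x, Y (Z x) + Z (Y x) = (-2 : ℂ) • Y x := fun x => LinearMap.congr_fun hYZ x
  have h3 : ∀ x, X (X x) - Y (Y x) = Z x := fun x => LinearMap.congr_fun hXYZ x
  have h1' : ∀ x, Y ((-Z) x) + (-Z) (Y x) = (2 : ℂ) • Y x := by
    intro x
    have := h2 x
    rw [LinearMap.neg_apply, LinearMap.neg_apply, map_neg, ← neg_add, this, neg_smul, neg_neg]
  have h2' : ∀ x, X ((-Z) x) + (-Z) (X x) = (-2 : ℂ) • X x := by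
    intro x
    have := h1 x
    rw [LinearMap.neg_apply, LinearMap.neg_apply, map_neg, ← neg_add, this, neg_smul]
  have h3' : ∀ x, Y (Y x) - X (X x) = (-Z) x := by
    intro x
    rw [LinearMap.neg_apply, ← h3 x]; abel
  have hs' : ∀ W : Submodule ℂ V, (∀ w ∈ W, Y w ∈ W) → (∀ w ∈ W, X w ∈ W) →
      (∀ w ∈ W, (-Z) w ∈ W) → W = ⊥ ∨ W = ⊤ := fun W hY hX hZ =>
    hsimple W hX hY fun w hw => by simpa using hZ w hw
  have hback : (∀ lam : ℂ, Module.finrank ℂ (Module.End.eigenspace (-Z) lam) ≤ 1) →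
      ∀ lam : ℂ, Module.finrank ℂ (Module.End.eigenspace Z lam) ≤ 1 := by
    intro h lam
    have : Module.End.eigenspace Z lam = Module.End.eigenspace (-Z) (-lam) := by
      ext w
      simp [Module.End.mem_eigenspace_iff]
    rw [this]; exact h _
  by_cases hodd : ∃ k : ℕ, ∃ v : V, v ≠ 0 ∧
      (Z v = (2 * k + 1 : ℂ) • v ∨ Z v = (-(2 * k + 1) : ℂ) • v)
  · classical
    have hmin := fun j hj => Nat.find_min hodd (m := j) hj
    obtain ⟨v, hv, hZ | hZ⟩ := Nat.find_spec hodd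
    · refine uf_odd X Y Z h1 h2 h3 hsimple _ v hv hZ ?_
      intro j hj w hw
      by_contra hw0
      exact hmin j hj ⟨w, hw0, Or.inr hw⟩
    · refine hback (uf_odd Y X (-Z) h1' h2' h3' hs' _ v hv
        (by rw [LinearMap.neg_apply, hZ, neg_smul, neg_neg]) ?_)
      intro j hj w hw
      by_contra hw0
      refine hmin j hj ⟨w, hw0, Or.inl ?_⟩
      rw [LinearMap.neg_apply, neg_smul] at hw
      exact neg_injective hw
  · push Not at hodd
    have hfin : Set.Finite {m : ℂ | Z.HasEigenvalue m} := Module.End.finite_hasEigenvalue Z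
    obtain ⟨m, hm, hmax⟩ := Set.exists_max_image _ Complex.re hfin
      (Module.End.exists_eigenvalue Z)
    obtain ⟨v, hv⟩ := Module.End.HasEigenvalue.exists_hasEigenvector hm
    have hZv := hv.apply_eq_smul
    have hv0 := hv.2
    have hZY : Z (Y v) = (-2 - m) • Y v := by
      have := h2 v
      rw [hZv, map_smul] at this
      rw [eq_sub_of_add_eq' this, ← sub_smul]
    have hZXY : Z (X (Y v)) = (4 + m) • X (Y v) := by
      have := h1 (Y v)
      rw [hZY, map_smul] at this
      rw [eq_sub_of_add_eq' this, ← sub_smul]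
      congr 1; ring
    have hXY : X (Y v) = 0 := by
      by_contra h
      have hE : Z.HasEigenvalue (4 + m) :=
        Module.End.hasEigenvalue_of_hasEigenvector
          ⟨Module.End.mem_eigenspace_iff.mpr hZXY, h⟩
      have := hmax _ hE
      norm_num at this
    by_cases hY : Y v = 0
    · refine hback (uf_core Y X (-Z) h1' h2' h3' hs' v hv0 (-m) 0
        (by rw [LinearMap.neg_apply, hZv, neg_smul]) (by rw [hY, zero_smul]) ?_)
      intro k hk
      exact (hodd k v hv0).1 (by rw [hZv, neg_injective hk])
    · refine uf_core X Y Z h1 h2 h3 hsimple (Y v) hY (-2 - m) 0 hZY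
        (by rw [hXY, zero_smul]) ?_
      intro k hk
      exact (hodd k (Y v) hY).2 (by rw [hZY, hk])
end

section
/- Let V be a finite-dimensional simple U-module with dim V ≥ 3. Order ℂ lexicographically (λ < μ if and only if Re λ < Re μ, or Re λ = Re μ and Im λ < Im μ), let λ₀ be the largest eigenvalue of the operator Z on V in this order, and let v be a non-zero vector with Z·v = λ₀·v. Then X·v ≠ 0. -/
/-- The lexicographic (strict) order on `ℂ`: compare real parts first, then
imaginary parts. -/
def Complex.lexLt (a b : ℂ) : Prop :=
  a.re < b.re ∨ (a.re = b.re ∧ a.im < b.im)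

/-- on a finite-dimensional simple module of dimension at least 3 over
`U = ℂ⟨X,Y,Z⟩/(XZ+ZX−2X, YZ+ZY+2Y, X²−Y²−Z)`, if `λ₀` is the largest eigenvalue
of `Z` for the lexicographic order on `ℂ` and `v` is a corresponding non-zero
eigenvector, then `X v ≠ 0`. -/
theorem UF_top_eigenvector_not_killed_by_X
    {V : Type*} [AddCommGroup V] [Module ℂ V] [FiniteDimensional ℂ V]
    (X Y Z : Module.End ℂ V)
    (hXZ : X * Z + Z * X = (2 : ℂ) • X)
    (hYZ : Y * Z + Z * Y = (-2 : ℂ) • Y)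
    (hXYZ : X * X - Y * Y = Z)
    (hsimple : ∀ W : Submodule ℂ V, (∀ w ∈ W, X w ∈ W) → (∀ w ∈ W, Y w ∈ W) →
      (∀ w ∈ W, Z w ∈ W) → W = ⊥ ∨ W = ⊤)
    (hdim : 3 ≤ Module.finrank ℂ V)
    (lam₀ : ℂ) (hlam₀ : Module.End.HasEigenvalue Z lam₀)
    (hmax : ∀ μ : ℂ, Module.End.HasEigenvalue Z μ → μ = lam₀ ∨ Complex.lexLt μ lam₀)
    (v : V) (hv : v ≠ 0) (hZv : Z v = lam₀ • v) :
    X v ≠ 0 := by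
  intro hXv
  have hX : ∀ w, Z (X w) = (2 : ℂ) • X w - X (Z w) := fun w => by
    have h := LinearMap.congr_fun hXZ w
    simp only [LinearMap.add_apply, Module.End.mul_apply, LinearMap.smul_apply] at h
    rw [← h]; abel
  have hY : ∀ w, Z (Y w) = (-2 : ℂ) • Y w - Y (Z w) := fun w => by
    have h := LinearMap.congr_fun hYZ w
    simp only [LinearMap.add_apply, Module.End.mul_apply, LinearMap.smul_apply] at h
    rw [← h]; abel
  have hZYv : Z (Y v) = (-2 - lam₀) • Y v := by
    rw [hY, hZv, map_smul, sub_smul]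
  have hZXYv : Z (X (Y v)) = (lam₀ + 4) • X (Y v) := by
    rw [hX, hZYv, map_smul, ← sub_smul]
    congr 1; ring
  have hXYv : X (Y v) = 0 := by
    by_contra hne
    have hev : Module.End.HasEigenvalue Z (lam₀ + 4) :=
      Module.End.hasEigenvalue_of_hasEigenvector
        (x := X (Y v)) ⟨Module.End.mem_eigenspace_iff.mpr hZXYv, hne⟩
    rcases hmax _ hev with h | h | h
    · have := congrArg Complex.re h
      simp at this
    · simp at h
      linarith
    · have := h.1
      simp at this
  have hYYv : Y (Y v) = (-lam₀) • v := by
    have h := LinearMap.congr_fun hXYZ v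
    simp only [LinearMap.sub_apply, Module.End.mul_apply, hXv, map_zero, hZv, zero_sub] at h
    rw [neg_smul, ← h, neg_neg]
  have key : ∀ T : Module.End ℂ V, T v ∈ Submodule.span ℂ {v, Y v} →
      T (Y v) ∈ Submodule.span ℂ {v, Y v} →
      ∀ w ∈ Submodule.span ℂ {v, Y v}, T w ∈ Submodule.span ℂ {v, Y v} := by
    intro T h1 h2 w hw
    obtain ⟨a, b, rfl⟩ := Submodule.mem_span_pair.mp hw
    rw [map_add, map_smul, map_smul]
    exact Submodule.add_mem _ (Submodule.smul_mem _ _ h1) (Submodule.smul_mem _ _ h2)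
  have m1 : v ∈ Submodule.span ℂ {v, Y v} := Submodule.subset_span (by simp)
  have m2 : Y v ∈ Submodule.span ℂ {v, Y v} := Submodule.subset_span (by simp)
  rcases hsimple (Submodule.span ℂ {v, Y v})
    (key X (by rw [hXv]; exact Submodule.zero_mem _) (by rw [hXYv]; exact Submodule.zero_mem _))
    (key Y m2 (by rw [hYYv]; exact Submodule.smul_mem _ _ m1))
    (key Z (by rw [hZv]; exact Submodule.smul_mem _ _ m1)
      (by rw [hZYv]; exact Submodule.smul_mem _ _ m2)) with h | h
  · rw [h] at m1
    exact hv ((Submodule.mem_bot ℂ).mp m1)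
  · classical
    have hle := finrank_span_finset_le_card (R := ℂ) ({v, Y v} : Finset V)
    have hc : ({v, Y v} : Finset V).card ≤ 2 := Finset.card_le_two
    rw [Set.finrank, Finset.coe_pair, h, finrank_top] at hle
    omega
end

section
/- Classification of finite-dimensional simple modules over the twisted enveloping algebra. Every non-zero finite-dimensional simple U-module is isomorphic to one of the U-modules E_n (n ≥ 0), A_n^+ or A_n^− (n ≥ 1), B_n^+ or B_n^− (n ≥ 0) defined in the context. -/
/-! Matrix models for the simple modules of the twisted enveloping algebra
`U = U_F(sl₂) = ℂ⟨X,Y,Z⟩/(XZ+ZX−2X, YZ+ZY+2Y, X²−Y²−Z)`.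

`Emod n` has basis `v₀,…,v_n, w₀,…,w_{n−1}`, encoded as `Fin (2n+1)` with
`v_k ↦ k` and `w_k ↦ n+1+k`.  `Amod n ε` has basis `v₀,…,v_{n−1}` encoded as
`Fin n` (with `w_k = v_{n−1−k}`).  `Bmod n ε` has basis `v₀,…,v_{n−1}, u`
encoded as `Fin (n+1)` with `u ↦ n`. -/

/-- The matrix of `X` on the even module `E_n`. -/
noncomputable def EmatX (n : ℕ) : Matrix (Fin (2 * n + 1)) (Fin (2 * n + 1)) ℂ :=
  fun r c =>
    if (c : ℕ) ≤ n ∧ (r : ℕ) = n + 1 + (c : ℕ) then 1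
    else if n + 1 ≤ (c : ℕ) ∧ (c : ℕ) = (r : ℕ) + (n + 1) then
      2 * (n : ℂ) + (((c : ℕ) : ℂ) - n - 1) * (4 * n - 2 - 4 * (((c : ℕ) : ℂ) - n - 1))
    else 0

/-- The matrix of `Y` on the even module `E_n`. -/
noncomputable def EmatY (n : ℕ) : Matrix (Fin (2 * n + 1)) (Fin (2 * n + 1)) ℂ :=
  fun r c =>
    if 1 ≤ (c : ℕ) ∧ (c : ℕ) ≤ n ∧ (r : ℕ) = n + (c : ℕ) then
      ((c : ℕ) : ℂ) * (4 * n + 2 - 4 * ((c : ℕ) : ℂ))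
    else if n + 1 ≤ (c : ℕ) ∧ (r : ℕ) + n = (c : ℕ) then 1
    else 0

/-- The matrix of `Z` on the even module `E_n`. -/
noncomputable def EmatZ (n : ℕ) : Matrix (Fin (2 * n + 1)) (Fin (2 * n + 1)) ℂ :=
  fun r c =>
    if r = c then
      (if (r : ℕ) ≤ n then 2 * (n : ℂ) - 4 * ((r : ℕ) : ℂ)
        else 4 * ((r : ℕ) : ℂ) - 6 * (n : ℂ) - 2)
    else 0

/-- The matrix of `X` on the odd module `A_n^ε`. -/
noncomputable def AmatX (n : ℕ) (ε : ℂ) : Matrix (Fin n) (Fin n) ℂ :=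
  fun r c =>
    if (r : ℕ) + (c : ℕ) = n - 1 then
      (if 2 * (c : ℕ) + 1 = n then ε * n
        else if 2 * (c : ℕ) < n then 1
        else 2 * (n : ℂ) - 1 + 4 * ((n : ℂ) - 1 - ((c : ℕ) : ℂ)) * ((c : ℕ) : ℂ))
    else 0

/-- The matrix of `Y` on the odd module `A_n^ε`. -/
noncomputable def AmatY (n : ℕ) (ε : ℂ) : Matrix (Fin n) (Fin n) ℂ :=
  fun r c =>
    if (r : ℕ) + (c : ℕ) = n then
      (if 2 * (c : ℕ) = n then ε * n
        else if 2 * (c : ℕ) < n then 4 * ((c : ℕ) : ℂ) * ((n : ℂ) - ((c : ℕ) : ℂ))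
        else 1)
    else 0

/-- The matrix of `Z` on the odd module `A_n^ε`. -/
noncomputable def AmatZ (n : ℕ) : Matrix (Fin n) (Fin n) ℂ :=
  fun r c => if r = c then 2 * (n : ℂ) - 1 - 4 * ((r : ℕ) : ℂ) else 0

/-- The matrix of `X` on the odd module `B_n^ε`. -/
noncomputable def BmatX (n : ℕ) (ε : ℂ) : Matrix (Fin (n + 1)) (Fin (n + 1)) ℂ :=
  fun r c =>
    if (c : ℕ) < n ∧ (r : ℕ) + (c : ℕ) = n - 1 then
      (if 2 * (c : ℕ) + 1 = n then ε * ((n : ℂ) + 1)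
        else if 2 * (c : ℕ) < n then 1
        else 4 * (n : ℂ) + 4 * ((n : ℂ) - 1 - ((c : ℕ) : ℂ)) * ((c : ℕ) : ℂ))
    else 0

/-- The matrix of `Y` on the odd module `B_n^ε`. -/
noncomputable def BmatY (n : ℕ) (ε : ℂ) : Matrix (Fin (n + 1)) (Fin (n + 1)) ℂ :=
  fun r c =>
    if (r : ℕ) + (c : ℕ) = n then
      (if (c : ℕ) = n then (if n = 0 then ε else 1)
        else if 2 * (c : ℕ) = n then ε * ((n : ℂ) + 1)
        else if 2 * (c : ℕ) < n then
          2 * (n : ℂ) + 1 + 4 * ((c : ℕ) : ℂ) * ((n : ℂ) - ((c : ℕ) : ℂ))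
        else 1)
    else 0

/-- The matrix of `Z` on the odd module `B_n^ε`. -/
noncomputable def BmatZ (n : ℕ) : Matrix (Fin (n + 1)) (Fin (n + 1)) ℂ :=
  fun r c => if r = c then 2 * (n : ℂ) - 1 - 4 * ((r : ℕ) : ℂ) else 0

/-- A module `(V, X, Y, Z)` is isomorphic, as a module over the twisted enveloping
algebra, to the matrix model `(ℂ^d, MX, MY, MZ)`. -/
def IsIsoToModel {V : Type*} [AddCommGroup V] [Module ℂ V]
    (X Y Z : Module.End ℂ V) {d : ℕ} (MX MY MZ : Matrix (Fin d) (Fin d) ℂ) : Prop :=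
  ∃ e : V ≃ₗ[ℂ] (Fin d → ℂ), ∀ v : V,
    e (X v) = Matrix.toLin' MX (e v) ∧
    e (Y v) = Matrix.toLin' MY (e v) ∧
    e (Z v) = Matrix.toLin' MZ (e v)

section Helpers

variable {V : Type*} [AddCommGroup V] [Module ℂ V]

/-- The defining relations, evaluated on vectors. -/
structure URel (X Y Z : Module.End ℂ V) : Prop where
  xz : ∀ v, Z (X v) = (2 : ℂ) • X v - X (Z v)
  yz : ∀ v, Z (Y v) = (-2 : ℂ) • Y v - Y (Z v)
  xy : ∀ v, X (X v) - Y (Y v) = Z v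

/-- Simplicity. -/
def USimple (X Y Z : Module.End ℂ V) : Prop :=
  ∀ W : Submodule ℂ V, (∀ w ∈ W, X w ∈ W) → (∀ w ∈ W, Y w ∈ W) →
      (∀ w ∈ W, Z w ∈ W) → W = ⊥ ∨ W = ⊤

theorem URel.swap {X Y Z : Module.End ℂ V} (h : URel X Y Z) : URel Y X (-Z) where
  xz v := by simp [h.yz v]; module
  yz v := by simp [h.xz v]; module
  xy v := by simp [← h.xy v]

theorem USimple.swap {X Y Z : Module.End ℂ V} (h : USimple X Y Z) : USimple Y X (-Z) := by
  intro W h1 h2 h3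
  refine h W h2 h1 (fun w hw => ?_)
  have := h3 w hw
  simpa using this

theorem exists_zero_of_eigen [FiniteDimensional ℂ V] (Z : Module.End ℂ V) (f : ℕ → V) (μ : ℕ → ℂ)
    (hμ : Function.Injective μ) (h : ∀ k, Z (f k) = μ k • f k) : ∃ k, f k = 0 := by
  by_contra! hne
  have := Module.End.eigenvectors_linearIndependent' Z μ hμ f
    (fun k => ⟨Module.End.mem_eigenspace_iff.mpr (h k), hne k⟩)
  have h2 := this.finite
  exact not_finite ℕ

theorem iso_of_basis {X Y Z : Module.End ℂ V} (hs : USimple X Y Z) {d : ℕ} (hd : 0 < d)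
    (MX MY MZ : Matrix (Fin d) (Fin d) ℂ) (f : Fin d → V) (μ : Fin d → ℂ)
    (hμ : Function.Injective μ) (hne : ∀ i, f i ≠ 0)
    (hX : ∀ c, X (f c) = ∑ r, MX r c • f r) (hY : ∀ c, Y (f c) = ∑ r, MY r c • f r)
    (hZ : ∀ c, Z (f c) = μ c • f c) (hMZ : ∀ r c, MZ r c = if r = c then μ r else 0) :
    IsIsoToModel X Y Z MX MY MZ := by
  have hli := Module.End.eigenvectors_linearIndependent' Z μ hμ f
    (fun k => ⟨Module.End.mem_eigenspace_iff.mpr (hZ k), hne k⟩)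
  have hZ' : ∀ c, Z (f c) = ∑ r, MZ r c • f r := by
    intro c
    simp [hZ, hMZ]
  have key : ∀ (T : Module.End ℂ V) (M : Matrix (Fin d) (Fin d) ℂ),
      (∀ c, T (f c) = ∑ r, M r c • f r) → ∀ w ∈ Submodule.span ℂ (Set.range f),
        T w ∈ Submodule.span ℂ (Set.range f) := by
    intro T M hT w hw
    induction hw using Submodule.span_induction with
    | mem x hx =>
      obtain ⟨c, rfl⟩ := hx
      rw [hT]
      exact Submodule.sum_mem _ fun r _ =>
        Submodule.smul_mem _ _ (Submodule.subset_span ⟨r, rfl⟩)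
    | zero => simp
    | add x y _ _ hx hy => rw [map_add]; exact Submodule.add_mem _ hx hy
    | smul a x _ hx => rw [map_smul]; exact Submodule.smul_mem _ _ hx
  have hspan : Submodule.span ℂ (Set.range f) = ⊤ := by
    rcases hs _ (key X MX hX) (key Y MY hY) (key Z MZ hZ') with h | h
    · exfalso
      apply hne ⟨0, hd⟩
      have : f ⟨0, hd⟩ ∈ Submodule.span ℂ (Set.range f) := Submodule.subset_span ⟨_, rfl⟩
      rw [h] at this
      simpa using this
    · exact h
  let b := Module.Basis.mk hli hspan.ge
  have key2 : ∀ (T : Module.End ℂ V) (M : Matrix (Fin d) (Fin d) ℂ),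
      (∀ c, T (f c) = ∑ r, M r c • f r) → ∀ v, b.equivFun (T v) = Matrix.toLin' M (b.equivFun v) := by
    intro T M hT v
    have : (b.equivFun : V →ₗ[ℂ] (Fin d → ℂ)) ∘ₗ T
        = Matrix.toLin' M ∘ₗ (b.equivFun : V →ₗ[ℂ] (Fin d → ℂ)) := by
      apply b.ext
      intro c
      have hb : ∀ i, b i = f i := fun i => Module.Basis.mk_apply hli hspan.ge i
      have : T (b c) = ∑ r, M r c • b r := by simp only [hb, hT]
      ext r
      simp [this, Matrix.mulVec, dotProduct, Finsupp.single_apply]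
    exact LinearMap.congr_fun this v
  exact ⟨b.equivFun, fun v => ⟨key2 X MX hX v, key2 Y MY hY v, key2 Z MZ hZ' v⟩⟩

/-- The chain of vectors `v_k`. -/
def vv (X Y : Module.End ℂ V) (v : V) (k : ℕ) : V := ((Y * X) ^ k) v

theorem vv_zero (X Y : Module.End ℂ V) (v : V) : vv X Y v 0 = v := rfl

theorem vv_succ (X Y : Module.End ℂ V) (v : V) (k : ℕ) :
    vv X Y v (k + 1) = Y (X (vv X Y v k)) := by
  simp [vv, pow_succ']

variable {X Y Z : Module.End ℂ V}

theorem vv_Z (h : URel X Y Z) {v : V} {l : ℂ} (hl : Z v = l • v) (k : ℕ) :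
    Z (vv X Y v k) = (l - 4 * k) • vv X Y v k := by
  induction k with
  | zero => simp [vv_zero, hl]
  | succ k ih =>
    rw [vv_succ, h.yz, h.xz, ih]
    push_cast
    simp only [map_sub, map_smul]
    module

theorem ww_Z (h : URel X Y Z) {v : V} {l : ℂ} (hl : Z v = l • v) (k : ℕ) :
    Z (X (vv X Y v k)) = (2 - l + 4 * k) • X (vv X Y v k) := by
  rw [h.xz, vv_Z h hl]
  simp only [map_smul]
  module

theorem ww_X (h : URel X Y Z) {v : V} {l : ℂ} (hl : Z v = l • v) (hv : Y v = 0) (k : ℕ) :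
    X (X (vv X Y v k)) = ((2 * k + 1) * (l - 2 * k)) • vv X Y v k := by
  induction k with
  | zero =>
    have := h.xy v
    simp [hv, hl] at this
    simp [vv_zero, this]
  | succ k ih =>
    have h1 := h.xy (X (vv X Y v k))
    rw [ih, ww_Z h hl, map_smul] at h1
    have h2 := h.xy (vv X Y v (k+1))
    rw [vv_Z h hl] at h2
    have h3 : Y (vv X Y v (k+1)) = ((2 * k + 1) * (l - 2 * k) - (2 - l + 4 * k) : ℂ) • X (vv X Y v k) := by
      rw [vv_succ, sub_smul, ← h1]; abel
    rw [h3, map_smul, ← vv_succ, sub_eq_iff_eq_add] at h2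
    rw [h2]
    push_cast
    module

theorem vv_Y (h : URel X Y Z) {v : V} {l : ℂ} (hl : Z v = l • v) (hv : Y v = 0) (k : ℕ) :
    Y (vv X Y v (k + 1)) = ((k + 1) * (2 * l - 2 - 4 * k) : ℂ) • X (vv X Y v k) := by
  have h1 := h.xy (X (vv X Y v k))
  rw [ww_X h hl hv, ww_Z h hl, map_smul, sub_eq_iff_eq_add] at h1
  have h3 : Y (vv X Y v (k+1)) = ((2 * k + 1) * (l - 2 * k) - (2 - l + 4 * k) : ℂ) • X (vv X Y v k) := by
    rw [vv_succ, sub_smul, h1]; abel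
  rw [h3]
  module

theorem ww_ne (h : URel X Y Z) {v : V} {l : ℂ} (hl : Z v = l • v) (hv : Y v = 0) (k : ℕ)
    (hk : l ≠ 2 * k) (hne : vv X Y v k ≠ 0) : X (vv X Y v k) ≠ 0 := by
  intro h0
  have := ww_X h hl hv k
  rw [h0, map_zero, eq_comm, smul_eq_zero, mul_eq_zero] at this
  rcases this with (h1 | h1) | h1
  · have : ((2 * k + 1 : ℕ) : ℂ) = 0 := by push_cast; exact h1
    exact absurd (Nat.cast_eq_zero.mp this) (by omega)
  · exact hk (sub_eq_zero.mp h1)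
  · exact hne h1

theorem vv_succ_ne (h : URel X Y Z) {v : V} {l : ℂ} (hl : Z v = l • v) (hv : Y v = 0) (k : ℕ)
    (hk : l ≠ 2 * k + 1) (hne : X (vv X Y v k) ≠ 0) : vv X Y v (k + 1) ≠ 0 := by
  intro h0
  have := vv_Y h hl hv k
  rw [h0, map_zero, eq_comm, smul_eq_zero, mul_eq_zero] at this
  rcases this with (h1 | h1) | h1
  · have : ((k + 1 : ℕ) : ℂ) = 0 := by push_cast; exact h1
    exact absurd (Nat.cast_eq_zero.mp this) (by omega)
  · exact hk (by linear_combination h1 / 2)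
  · exact hne h1

theorem vv_exists_zero [FiniteDimensional ℂ V] (h : URel X Y Z) {v : V} {l : ℂ}
    (hl : Z v = l • v) : ∃ k, vv X Y v k = 0 := by
  apply exists_zero_of_eigen Z _ (fun k : ℕ => l - 4 * (k : ℂ)) _ (vv_Z h hl)
  intro a b hab
  have : (a : ℂ) = b := by
    simp only at hab
    linear_combination -hab / 4
  exact_mod_cast this

theorem weight_cases [FiniteDimensional ℂ V] (h : URel X Y Z) {v : V} {l : ℂ}
    (hl : Z v = l • v) (hv : Y v = 0) (hne : v ≠ 0) :
    (∃ n : ℕ, l = 2 * n) ∨ (∃ n : ℕ, l = 2 * n + 1) := by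
  by_contra! hc
  obtain ⟨k, hk⟩ := vv_exists_zero h hl
  revert hk
  change vv X Y v k ≠ 0
  induction k with
  | zero => exact hne
  | succ k ih => exact vv_succ_ne h hl hv k (hc.2 k) (ww_ne h hl hv k (hc.1 k) ih)

theorem even_ne_odd (a b : ℕ) : (2 * a : ℂ) ≠ 2 * b + 1 := by
  intro h
  have : 2 * a = 2 * b + 1 := by exact_mod_cast h
  omega

theorem E_vv_ne (h : URel X Y Z) {v : V} {n : ℕ}
    (hl : Z v = (2 * n : ℂ) • v) (hv : Y v = 0) (hne : v ≠ 0) (k : ℕ) (hk : k ≤ n) :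
    vv X Y v k ≠ 0 := by
  induction k with
  | zero => exact hne
  | succ k ih =>
    refine vv_succ_ne h hl hv k (even_ne_odd _ _) (ww_ne h hl hv k ?_ (ih (by omega)))
    intro h0
    have : 2 * n = 2 * k := by exact_mod_cast h0
    omega

theorem E_ww_ne (h : URel X Y Z) {v : V} {n : ℕ}
    (hl : Z v = (2 * n : ℂ) • v) (hv : Y v = 0) (hne : v ≠ 0) (k : ℕ) (hk : k < n) :
    X (vv X Y v k) ≠ 0 := by
  refine ww_ne h hl hv k ?_ (E_vv_ne h hl hv hne k hk.le)
  intro h0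
  have : 2 * n = 2 * k := by exact_mod_cast h0
  omega

theorem E_end [FiniteDimensional ℂ V] (h : URel X Y Z) {v : V} {n : ℕ}
    (hl : Z v = (2 * n : ℂ) • v) (hv : Y v = 0) (hne : v ≠ 0) : X (vv X Y v n) = 0 := by
  by_contra hc
  obtain ⟨k, hk⟩ := vv_exists_zero h hl
  rcases le_or_gt k n with hkn | hkn
  · exact E_vv_ne h hl hv hne k hkn hk
  obtain ⟨j, rfl⟩ := Nat.exists_eq_add_of_lt hkn
  revert hk
  change vv X Y v (n + j + 1) ≠ 0
  clear hkn
  induction j with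
  | zero => exact vv_succ_ne h hl hv _ (even_ne_odd _ _) hc
  | succ j ih =>
    refine vv_succ_ne h hl hv _ (even_ne_odd _ _) (ww_ne h hl hv _ ?_ ih)
    intro h0
    have : 2 * n = 2 * (n + j + 1) := by exact_mod_cast h0
    omega

theorem A_vv_ne (h : URel X Y Z) {v : V} {n : ℕ}
    (hl : Z v = (2 * n + 1 : ℂ) • v) (hv : Y v = 0) (hne : v ≠ 0) (k : ℕ) (hk : k ≤ n) :
    vv X Y v k ≠ 0 := by
  induction k with
  | zero => exact hne
  | succ k ih =>
    refine vv_succ_ne h hl hv k ?_ (ww_ne h hl hv k (even_ne_odd _ _).symm (ih (by omega)))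
    intro h0
    have : 2 * n + 1 = 2 * k + 1 := by exact_mod_cast h0
    omega

theorem A_end [FiniteDimensional ℂ V] (h : URel X Y Z) {v : V} {n : ℕ}
    (hl : Z v = (2 * n + 1 : ℂ) • v) (hv : Y v = 0) : vv X Y v (n + 1) = 0 := by
  by_contra hc
  have hne : v ≠ 0 := by
    rintro rfl
    exact hc (by simp [vv])
  obtain ⟨k, hk⟩ := vv_exists_zero h hl
  rcases le_or_gt k n with hkn | hkn
  · exact A_vv_ne h hl hv hne k hkn hk
  obtain ⟨j, rfl⟩ := Nat.exists_eq_add_of_lt hkn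
  revert hk
  change vv X Y v (n + j + 1) ≠ 0
  clear hkn
  induction j with
  | zero => exact hc
  | succ j ih =>
    refine vv_succ_ne h hl hv _ ?_ (ww_ne h hl hv _ (even_ne_odd _ _).symm ih)
    intro h0
    have : 2 * n + 1 = 2 * (n + j + 1) + 1 := by exact_mod_cast h0
    omega

/-- There is a highest weight vector that is reproduced by the full chain. -/
theorem A_eigen [FiniteDimensional ℂ V] (h : URel X Y Z) {v : V} {n : ℕ}
    (hl : Z v = (2 * n + 1 : ℂ) • v) (hv : Y v = 0) (hne : v ≠ 0) :
    ∃ (t : V) (μ : ℂ), t ≠ 0 ∧ Y t = 0 ∧ Z t = (2 * n + 1 : ℂ) • t ∧ X (vv X Y t n) = μ • t := by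
  let K : Submodule ℂ V := LinearMap.ker Y ⊓ Module.End.eigenspace Z (2 * n + 1 : ℂ)
  have hK : ∀ x, x ∈ K ↔ Y x = 0 ∧ Z x = (2 * n + 1 : ℂ) • x := by
    intro x
    simp [K]
  let P : Module.End ℂ V := X * (Y * X) ^ n
  have hP : ∀ x, P x = X (vv X Y x n) := fun x => rfl
  have hPK : ∀ x ∈ K, P x ∈ K := by
    intro x hx
    rw [hK] at hx ⊢
    rw [hP]
    refine ⟨?_, ?_⟩
    · rw [← vv_succ]; exact A_end h hx.2 hx.1
    · rw [ww_Z h hx.2]; congr 1; ring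
  have : Nontrivial K := ⟨⟨v, (hK v).2 ⟨hv, hl⟩⟩, 0, by simpa using hne⟩
  obtain ⟨μ, hμ⟩ := Module.End.exists_eigenvalue (P.restrict hPK)
  obtain ⟨t, ht⟩ := hμ.exists_hasEigenvector
  have h1 := ht.apply_eq_smul
  have h2 := ht.2
  have h3 := (hK t).1 t.2
  refine ⟨t, μ, by simpa using h2, h3.1, h3.2, ?_⟩
  have := congrArg Subtype.val h1
  simpa [hP] using this

/-- Proportionality in the type `A` chain. -/
theorem A_prop (h : URel X Y Z) {v : V} {n : ℕ}
    (hl : Z v = (2 * n + 1 : ℂ) • v) (hv : Y v = 0) {μ : ℂ}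
    (hμ : X (vv X Y v n) = μ • v) (i j : ℕ) (hij : i + j = n) :
    (∃ c : ℂ, X (vv X Y v i) = c • vv X Y v j) ∧ (∃ c : ℂ, vv X Y v i = c • X (vv X Y v j)) := by
  have step : ∀ i j : ℕ, (∃ c : ℂ, X (vv X Y v i) = c • vv X Y v j) →
      (∃ c : ℂ, vv X Y v i = c • X (vv X Y v j)) := by
    rintro i j ⟨c, hc⟩
    have h1 := congrArg X hc
    rw [ww_X h hl hv, map_smul] at h1
    have h0 : ((2 * i + 1) * (2 * n + 1 - 2 * i) : ℂ) ≠ 0 := by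
      intro h0
      rcases mul_eq_zero.mp h0 with h0 | h0
      · exact even_ne_odd 0 i (by simp [h0])
      · exact even_ne_odd i n (by linear_combination -h0)
    refine ⟨((2 * i + 1) * (2 * n + 1 - 2 * i) : ℂ)⁻¹ * c, ?_⟩
    rw [mul_smul, ← h1, smul_smul, inv_mul_cancel₀ h0, one_smul]
  suffices hs : ∃ c : ℂ, X (vv X Y v i) = c • vv X Y v j from ⟨hs, step i j hs⟩
  induction j generalizing i with
  | zero =>
    obtain rfl : i = n := by omega
    exact ⟨μ, hμ⟩
  | succ j ih =>
    obtain ⟨c, hc⟩ := step _ _ (ih (i + 1) (by omega))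
    have h1 := congrArg Y hc
    rw [vv_Y h hl hv, map_smul, ← vv_succ] at h1
    have h0 : ((i + 1) * (2 * (2 * n + 1) - 2 - 4 * i) : ℂ) ≠ 0 := by
      intro h0
      rcases mul_eq_zero.mp h0 with h0 | h0
      · have : i + 1 = 0 := by exact_mod_cast h0
        omega
      · have : (n : ℂ) = i := by linear_combination h0 / 4
        have : n = i := by exact_mod_cast this
        omega
    refine ⟨((i + 1) * (2 * (2 * n + 1) - 2 - 4 * i) : ℂ)⁻¹ * c, ?_⟩
    rw [mul_smul, ← h1, smul_smul, inv_mul_cancel₀ h0, one_smul]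

theorem sum_one {d : ℕ} (M : Matrix (Fin d) (Fin d) ℂ) (f : Fin d → V) (c : Fin d) (r₀ : Fin d)
    (hM : ∀ r, r ≠ r₀ → M r c = 0) : ∑ r, M r c • f r = M r₀ c • f r₀ := by
  apply Finset.sum_eq_single r₀
  · intro r _ hr
    rw [hM r hr, zero_smul]
  · simp

theorem E_iso [FiniteDimensional ℂ V] (h : URel X Y Z) (hs : USimple X Y Z) {v : V} {n : ℕ}
    (hl : Z v = (2 * n : ℂ) • v) (hv : Y v = 0) (hne : v ≠ 0) :
    IsIsoToModel X Y Z (EmatX n) (EmatY n) (EmatZ n) := by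
  have hend := E_end h hl hv hne
  refine iso_of_basis hs (by omega) _ _ _
    (fun i => if (i : ℕ) ≤ n then vv X Y v i else X (vv X Y v ((i : ℕ) - (n + 1))))
    (fun r => if (r : ℕ) ≤ n then 2 * (n : ℂ) - 4 * ((r : ℕ) : ℂ)
        else 4 * ((r : ℕ) : ℂ) - 6 * (n : ℂ) - 2) ?_ ?_ ?_ ?_ ?_ (fun r c => rfl)
  · intro a b hab
    simp only at hab
    ext
    split_ifs at hab with h1 h2 h2
    · have : ((a : ℕ) : ℂ) = (b : ℕ) := by linear_combination -hab / 4
      exact_mod_cast this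
    · exfalso
      have : ((4 * n + 1 : ℕ) : ℂ) = ((2 * a + 2 * b : ℕ) : ℂ) := by
        push_cast; linear_combination hab / 2
      have : (4 * n + 1 : ℕ) = (2 * a + 2 * b : ℕ) := by exact_mod_cast this
      omega
    · exfalso
      have : ((4 * n + 1 : ℕ) : ℂ) = ((2 * a + 2 * b : ℕ) : ℂ) := by
        push_cast; linear_combination -hab / 2
      have : (4 * n + 1 : ℕ) = (2 * a + 2 * b : ℕ) := by exact_mod_cast this
      omega
    · have : ((a : ℕ) : ℂ) = (b : ℕ) := by linear_combination hab / 4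
      exact_mod_cast this
  · intro i
    split_ifs with h1
    · exact E_vv_ne h hl hv hne _ h1
    · exact E_ww_ne h hl hv hne _ (by omega)
  · intro c
    rcases lt_trichotomy (c : ℕ) n with hc | hc | hc
    · rw [sum_one _ _ c ⟨n + 1 + c, by omega⟩]
      · simp [EmatX, hc.le]
        intro h'
        omega
      · intro r hr
        have : (r : ℕ) ≠ n + 1 + c := fun h => hr (Fin.ext h)
        simp only [EmatX]
        rw [if_neg (by omega), if_neg (by omega)]
    · rw [Finset.sum_eq_zero]
      · simp [hc, hend]
      · intro r _
        simp only [EmatX]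
        rw [if_neg (by omega), if_neg (by omega), zero_smul]
    · obtain ⟨k, hk⟩ := Nat.exists_eq_add_of_lt hc
      rw [sum_one _ _ c ⟨k, by omega⟩]
      · have e : n + k + 1 - (n + 1) = k := by omega
        simp only [EmatX, hk]
        rw [if_neg (by omega), if_neg (by omega), if_pos (by omega), if_pos (by omega), e,
          ww_X h hl hv]
        push_cast
        congr 1
        ring
      · intro r hr
        have : (r : ℕ) ≠ k := fun h => hr (Fin.ext h)
        simp only [EmatX]
        rw [if_neg (by omega), if_neg (by omega)]
  · intro c
    rcases Nat.eq_zero_or_pos (c : ℕ) with hc | hc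
    · rw [Finset.sum_eq_zero]
      · simp [hc, vv_zero, hv]
      · intro r _
        simp only [EmatY]
        rw [if_neg (by omega), if_neg (by omega), zero_smul]
    rcases le_or_gt (c : ℕ) n with hcn | hcn
    · obtain ⟨k, hk⟩ := Nat.exists_eq_add_of_lt hc
      rw [zero_add] at hk
      rw [sum_one _ _ c ⟨n + c, by omega⟩]
      · have e : n + (k + 1) - (n + 1) = k := by omega
        simp only [EmatY, hk, and_true]
        rw [if_pos (by omega), if_pos (by omega), if_neg (by omega), e, vv_Y h hl hv]
        push_cast
        congr 1
        ring
      · intro r hr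
        have : (r : ℕ) ≠ n + c := fun h => hr (Fin.ext h)
        simp only [EmatY]
        rw [if_neg (by omega), if_neg (by omega)]
    · obtain ⟨k, hk⟩ := Nat.exists_eq_add_of_lt hcn
      rw [sum_one _ _ c ⟨k + 1, by omega⟩]
      · have e : n + k + 1 - (n + 1) = k := by omega
        simp only [EmatY, hk]
        rw [if_neg (by omega), if_neg (by omega), if_pos (by omega), if_pos (by omega), e,
          one_smul, vv_succ]
      · intro r hr
        have : (r : ℕ) ≠ k + 1 := fun h => hr (Fin.ext h)
        simp only [EmatY]
        rw [if_neg (by omega), if_neg (by omega)]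
  · intro c
    split_ifs with h1
    · exact vv_Z h hl c
    · obtain ⟨k, hk⟩ := Nat.exists_eq_add_of_lt (not_le.mp h1)
      have e : n + k + 1 - (n + 1) = k := by omega
      rw [hk, e, ww_Z h hl]
      push_cast
      congr 1
      ring

theorem sq_cases {c m : ℂ} (h : c * c = m * m) :
    ∃ ε : ℂ, (ε = 1 ∨ ε = -1) ∧ c = ε * m := by
  rcases mul_self_eq_mul_self_iff.mp h with h | h
  · exact ⟨1, Or.inl rfl, by simp [h]⟩
  · exact ⟨-1, Or.inr rfl, by simp [h]⟩

/-- The middle relation in the type `A` chain (with `N = n + 1`). -/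
theorem A_mid (h : URel X Y Z) {v : V} {n : ℕ}
    (hl : Z v = (2 * n + 1 : ℂ) • v) (hv : Y v = 0) (hne : v ≠ 0) {μ : ℂ}
    (hμ : X (vv X Y v n) = μ • v) :
    ∃ ε : ℂ, (ε = 1 ∨ ε = -1) ∧
      (∀ m, n = 2 * m → X (vv X Y v m) = (ε * (n + 1)) • vv X Y v m) ∧
      (∀ m, n = 2 * m + 1 → vv X Y v (m + 1) = (ε * (n + 1)) • X (vv X Y v m)) := by
  rcases Nat.even_or_odd' n with ⟨m, hm | hm⟩
  · obtain ⟨c, hc⟩ := (A_prop h hl hv hμ m m (by omega)).1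
    have h1 := ww_X h hl hv m
    have hmn := A_vv_ne h hl hv hne m (by omega)
    rw [hc, map_smul, hc, smul_smul] at h1
    have h2 := smul_left_injective ℂ hmn h1
    have h3 : c * c = (n + 1 : ℂ) * (n + 1) := by
      rw [h2, hm]; push_cast; ring
    obtain ⟨ε, hε, hce⟩ := sq_cases h3
    refine ⟨ε, hε, ?_, ?_⟩
    · intro m' hm'
      obtain rfl : m' = m := by omega
      rw [hc, hce]
    · intro m' hm'; omega
  · obtain ⟨c, hc⟩ := (A_prop h hl hv hμ (m + 1) m (by omega)).2
    have h1 := vv_Y h hl hv m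
    have hmn := ww_ne h hl hv m (even_ne_odd _ _).symm (A_vv_ne h hl hv hne m (by omega))
    rw [hc, map_smul, ← vv_succ, hc, smul_smul] at h1
    have h2 := smul_left_injective ℂ hmn h1
    have h3 : c * c = (n + 1 : ℂ) * (n + 1) := by
      rw [h2, hm]; push_cast; ring
    obtain ⟨ε, hε, hce⟩ := sq_cases h3
    refine ⟨ε, hε, ?_, ?_⟩
    · intro m' hm'; omega
    · intro m' hm'
      obtain rfl : m' = m := by omega
      rw [hc, hce]

theorem A_iso [FiniteDimensional ℂ V] (h : URel X Y Z) (hs : USimple X Y Z) {v : V} {n : ℕ}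
    (hl : Z v = (2 * n + 1 : ℂ) • v) (hv : Y v = 0) (hne : v ≠ 0) :
    ∃ ε : ℂ, (ε = 1 ∨ ε = -1) ∧
      IsIsoToModel X Y Z (AmatX (n + 1) ε) (AmatY (n + 1) ε) (AmatZ (n + 1)) := by
  obtain ⟨t, μ, htne, htY, htZ, htP⟩ := A_eigen h hl hv hne
  clear hl hv hne v
  obtain ⟨ε, hε, hmX, hmY⟩ := A_mid h htZ htY htne htP
  refine ⟨ε, hε, ?_⟩
  refine iso_of_basis hs (by omega) _ _ _
    (fun i => if 2 * (i : ℕ) ≤ n then vv X Y t i else X (vv X Y t (n - (i : ℕ))))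
    (fun r => 2 * ((n + 1 : ℕ) : ℂ) - 1 - 4 * ((r : ℕ) : ℂ)) ?_ ?_ ?_ ?_ ?_ (fun r c => rfl)
  · intro a b hab
    simp only at hab
    ext
    have : ((a : ℕ) : ℂ) = (b : ℕ) := by linear_combination -hab / 4
    exact_mod_cast this
  · intro i
    split_ifs with h1
    · exact A_vv_ne h htZ htY htne _ (by omega)
    · exact ww_ne h htZ htY _ (even_ne_odd _ _).symm (A_vv_ne h htZ htY htne _ (by omega))
  · intro c
    have hcn : (c : ℕ) ≤ n := by omega
    obtain ⟨r, hr⟩ := Nat.exists_eq_add_of_le hcn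
    rw [sum_one _ _ c ⟨r, by omega⟩]
    · simp only [AmatX]
      rw [if_pos (by omega : r + (c : ℕ) = n + 1 - 1)]
      rcases lt_trichotomy (2 * (c : ℕ)) n with hc | hc | hc
      · rw [if_pos hc.le, if_neg (by omega), if_pos (by omega), if_neg (by omega), one_smul]
        congr 2
        omega
      · have e : r = c := by omega
        rw [if_pos hc.le, if_pos (by omega), e, if_pos (by omega), hmX c hc.symm]
        push_cast
        rfl
      · have e : n - (c : ℕ) = r := by omega
        rw [if_neg (by omega), if_neg (by omega), if_neg (by omega), if_pos (by omega), e,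
          ww_X h htZ htY]
        congr 1
        have : (n : ℂ) = c + r := by exact_mod_cast hr
        push_cast
        rw [this]
        ring
    · intro r' hr'
      have : (r' : ℕ) ≠ r := fun h => hr' (Fin.ext h)
      simp only [AmatX]
      rw [if_neg (by omega)]
  · intro c
    rcases Nat.eq_zero_or_pos (c : ℕ) with hc0 | hc0
    · rw [Finset.sum_eq_zero]
      · simp [hc0, vv_zero, htY]
      · intro r _
        simp only [AmatY]
        rw [if_neg (by omega), zero_smul]
    obtain ⟨k, hk⟩ := Nat.exists_eq_add_of_lt hc0
    rw [zero_add] at hk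
    have hcn : k + 1 ≤ n := by omega
    obtain ⟨j, hj⟩ := Nat.exists_eq_add_of_le hcn
    rw [sum_one _ _ c ⟨j + 1, by omega⟩]
    · simp only [AmatY]
      rw [if_pos (by omega : j + 1 + (c : ℕ) = n + 1)]
      rcases lt_trichotomy (2 * (c : ℕ)) (n + 1) with hc | hc | hc
      · have e : n - (j + 1) = k := by omega
        rw [if_pos (by omega), if_neg (by omega), if_pos (by omega), if_neg (by omega), e, hk,
          vv_Y h htZ htY]
        congr 1
        have : (n : ℂ) = k + 1 + j := by exact_mod_cast hj
        push_cast
        rw [this]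
        ring
      · have e : n - (c : ℕ) = k := by omega
        have e2 : n - (j + 1) = k := by omega
        rw [if_neg (by omega), if_pos (by omega), if_neg (by omega), e, e2, ← vv_succ,
          hmY k (by omega)]
        push_cast
        rfl
      · have e : n - (c : ℕ) = j := by omega
        rw [if_neg (by omega), if_neg (by omega), if_neg (by omega), if_pos (by omega), e,
          one_smul, vv_succ]
    · intro r' hr'
      have : (r' : ℕ) ≠ j + 1 := fun h => hr' (Fin.ext h)
      simp only [AmatY]
      rw [if_neg (by omega)]
  · intro c
    split_ifs with h1
    · rw [vv_Z h htZ]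
      push_cast
      congr 1
      ring
    · rw [ww_Z h htZ]
      have hcn : (c : ℕ) ≤ n := by omega
      push_cast [Nat.cast_sub hcn]
      congr 1
      ring

/-- `B_n` is the twist of `A_{n+1}`. -/
theorem B_of_A {n : ℕ} {ε : ℂ}
    (hA : IsIsoToModel Y X (-Z) (AmatX (n + 1) ε) (AmatY (n + 1) ε) (AmatZ (n + 1))) :
    IsIsoToModel X Y Z (BmatX n ε) (BmatY n ε) (BmatZ n) := by
  obtain ⟨e, he⟩ := hA
  have key : ∀ (M N : Matrix (Fin (n + 1)) (Fin (n + 1)) ℂ) (x : Fin (n + 1) → ℂ),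
      (∀ r c, N r c = M r.rev c.rev) → ∀ r, (M.mulVec x) r.rev = (N.mulVec (fun i => x i.rev)) r := by
    intro M N x hMN r
    simp only [Matrix.mulVec, dotProduct, hMN]
    exact (Equiv.sum_comp Fin.revPerm (fun c => M r.rev c * x c)).symm
  have hX : ∀ r c, BmatX n ε r c = AmatY (n + 1) ε r.rev c.rev := by
    intro r c
    simp only [BmatX, AmatY, Fin.val_rev]
    obtain ⟨k, hk⟩ := Nat.exists_eq_add_of_le (show (c : ℕ) ≤ n by omega)
    have ek : n + 1 - ((c : ℕ) + 1) = k := by omega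
    have hk' : (n : ℂ) = c + k := by exact_mod_cast hk
    rw [ek]
    by_cases h1 : (c : ℕ) < n ∧ (r : ℕ) + c = n - 1
    · rw [if_pos h1, if_pos (show n + 1 - ((r : ℕ) + 1) + k = n + 1 by omega)]
      by_cases h2 : 2 * (c : ℕ) + 1 = n
      · rw [if_pos h2, if_pos (by omega)]
        push_cast; rfl
      · rw [if_neg h2, if_neg (show ¬ 2 * k = n + 1 by omega)]
        by_cases h3 : 2 * (c : ℕ) < n
        · rw [if_pos h3, if_neg (by omega)]
        · rw [if_neg h3, if_pos (by omega)]
          push_cast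
          rw [hk']
          ring
    · rw [if_neg h1, if_neg (by omega)]
  have hY : ∀ r c, BmatY n ε r c = AmatX (n + 1) ε r.rev c.rev := by
    intro r c
    simp only [BmatY, AmatX, Fin.val_rev]
    obtain ⟨k, hk⟩ := Nat.exists_eq_add_of_le (show (c : ℕ) ≤ n by omega)
    have ek : n + 1 - ((c : ℕ) + 1) = k := by omega
    have hk' : (n : ℂ) = c + k := by exact_mod_cast hk
    rw [ek]
    by_cases h1 : (r : ℕ) + c = n
    · rw [if_pos h1, if_pos (show n + 1 - ((r : ℕ) + 1) + k = n + 1 - 1 by omega)]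
      by_cases h0 : (c : ℕ) = n
      · rw [if_pos h0]
        by_cases hn : n = 0
        · subst hn
          rw [if_pos rfl, if_pos (by omega)]
          simp
        · rw [if_neg hn, if_neg (by omega), if_pos (by omega)]
      rw [if_neg h0]
      by_cases h2 : 2 * (c : ℕ) = n
      · rw [if_pos h2, if_pos (by omega)]
        push_cast; rfl
      · rw [if_neg h2, if_neg (show ¬ 2 * k + 1 = n + 1 by omega)]
        by_cases h3 : 2 * (c : ℕ) < n
        · rw [if_pos h3, if_neg (by omega)]
          push_cast
          rw [hk']
          ring
        · rw [if_neg h3, if_pos (by omega)]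
    · rw [if_neg h1, if_neg (by omega)]
  have hZ : ∀ r c, BmatZ n r c = (-AmatZ (n + 1)) r.rev c.rev := by
    intro r c
    simp only [BmatZ, AmatZ, Matrix.neg_apply, Fin.rev_inj]
    split_ifs
    · rw [Fin.val_rev, Nat.cast_sub (by omega)]
      push_cast
      ring
    · simp
  refine ⟨e.trans (LinearEquiv.funCongrLeft ℂ ℂ Fin.revPerm), fun v => ⟨?_, ?_, ?_⟩⟩
  · ext r
    have := congrFun (he v).2.1 r.rev
    rw [Matrix.toLin'_apply, key _ _ _ hX] at this
    exact this
  · ext r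
    have := congrFun (he v).1 r.rev
    rw [Matrix.toLin'_apply, key _ _ _ hY] at this
    exact this
  · ext r
    have h1 := (he v).2.2
    have h2 : e (Z v) = (-AmatZ (n + 1)).mulVec (e v) := by
      rw [Matrix.neg_mulVec, ← Matrix.toLin'_apply, ← h1]; simp
    have := congrFun h2 r.rev
    rw [key _ _ _ hZ] at this
    exact this

theorem main_Y [FiniteDimensional ℂ V] (h : URel X Y Z) (hs : USimple X Y Z) {v : V} {l : ℂ}
    (hl : Z v = l • v) (hv : Y v = 0) (hne : v ≠ 0) :
    ((∃ n : ℕ, IsIsoToModel X Y Z (EmatX n) (EmatY n) (EmatZ n)) ∧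
      ∃ (t : V) (m : ℂ), t ≠ 0 ∧ X t = 0 ∧ Z t = m • t) ∨
    (∃ (n : ℕ) (ε : ℂ), (ε = 1 ∨ ε = -1) ∧
      IsIsoToModel X Y Z (AmatX (n + 1) ε) (AmatY (n + 1) ε) (AmatZ (n + 1))) := by
  rcases weight_cases h hl hv hne with ⟨n, rfl⟩ | ⟨n, rfl⟩
  · exact Or.inl ⟨⟨n, E_iso h hs hl hv hne⟩, vv X Y v n, _, E_vv_ne h hl hv hne n le_rfl,
      E_end h hl hv hne, vv_Z h hl n⟩
  · obtain ⟨ε, hε, hi⟩ := A_iso h hs hl hv hne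
    exact Or.inr ⟨n, ε, hε, hi⟩

theorem exists_top_weight [FiniteDimensional ℂ V] [Nontrivial V] (Z : Module.End ℂ V) :
    ∃ (v : V) (l : ℂ), v ≠ 0 ∧ Z v = l • v ∧ ∀ u : V, Z u = (l + 4) • u → u = 0 := by
  by_contra! hc
  obtain ⟨m, hm⟩ := Module.End.exists_eigenvalue Z
  obtain ⟨v, hv⟩ := hm.exists_hasEigenvector
  have hall : ∀ k : ℕ, ∃ u : V, u ≠ 0 ∧ Z u = (m + 4 * k) • u := by
    intro k
    induction k with
    | zero => exact ⟨v, hv.2, by simpa using hv.apply_eq_smul⟩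
    | succ k ih =>
      obtain ⟨u, hu, hZu⟩ := ih
      obtain ⟨w, hw, hw0⟩ := hc u _ hu hZu
      refine ⟨w, hw0, ?_⟩
      rw [hw]
      push_cast
      congr 1
      ring
  choose f hf hfZ using hall
  obtain ⟨k, hk⟩ := exists_zero_of_eigen Z f (fun k : ℕ => m + 4 * (k : ℂ)) (by
    intro a b hab
    have : (a : ℂ) = b := by
      simp only at hab
      linear_combination hab / 4
    exact_mod_cast this) hfZ
  exact hf k hk

end Helpers

/-- classification: every non-zero finite-dimensional simple module
over `U = ℂ⟨X,Y,Z⟩/(XZ+ZX−2X, YZ+ZY+2Y, X²−Y²−Z)` is isomorphic to one of the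
modules `E_n` (`n ≥ 0`), `A_n^±` (`n ≥ 1`) or `B_n^±` (`n ≥ 0`). -/
theorem UF_simple_module_classification
    {V : Type*} [AddCommGroup V] [Module ℂ V] [FiniteDimensional ℂ V] [Nontrivial V]
    (X Y Z : Module.End ℂ V)
    (hXZ : X * Z + Z * X = (2 : ℂ) • X)
    (hYZ : Y * Z + Z * Y = (-2 : ℂ) • Y)
    (hXYZ : X * X - Y * Y = Z)
    (hsimple : ∀ W : Submodule ℂ V, (∀ w ∈ W, X w ∈ W) → (∀ w ∈ W, Y w ∈ W) →
      (∀ w ∈ W, Z w ∈ W) → W = ⊥ ∨ W = ⊤) :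
    (∃ n : ℕ, IsIsoToModel X Y Z (EmatX n) (EmatY n) (EmatZ n)) ∨
    (∃ (n : ℕ) (ε : ℂ), 1 ≤ n ∧ (ε = 1 ∨ ε = -1) ∧
      IsIsoToModel X Y Z (AmatX n ε) (AmatY n ε) (AmatZ n)) ∨
    (∃ (n : ℕ) (ε : ℂ), (ε = 1 ∨ ε = -1) ∧
      IsIsoToModel X Y Z (BmatX n ε) (BmatY n ε) (BmatZ n)) := by
  have h : URel X Y Z := by
    refine ⟨fun v => ?_, fun v => ?_, fun v => ?_⟩
    · have := LinearMap.congr_fun hXZ v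
      simp only [LinearMap.add_apply, Module.End.mul_apply, LinearMap.smul_apply] at this
      rw [← this]; abel
    · have := LinearMap.congr_fun hYZ v
      simp only [LinearMap.add_apply, Module.End.mul_apply, LinearMap.smul_apply] at this
      rw [← this]; abel
    · have := LinearMap.congr_fun hXYZ v
      simpa using this
  have hs : USimple X Y Z := hsimple
  have caseY : ∀ (v : V) (l : ℂ), v ≠ 0 → Y v = 0 → Z v = l • v →
      (∃ n : ℕ, IsIsoToModel X Y Z (EmatX n) (EmatY n) (EmatZ n)) ∨
      (∃ (n : ℕ) (ε : ℂ), 1 ≤ n ∧ (ε = 1 ∨ ε = -1) ∧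
        IsIsoToModel X Y Z (AmatX n ε) (AmatY n ε) (AmatZ n)) := by
    intro v l hne hv hl
    rcases main_Y h hs hl hv hne with hE | ⟨n, ε, hε, hi⟩
    · exact Or.inl hE.1
    · exact Or.inr ⟨n + 1, ε, by omega, hε, hi⟩
  obtain ⟨v, l, hne, hl, htop⟩ := exists_top_weight Z
  by_cases hY : Y v = 0
  · exact or_assoc.mp (Or.inl (caseY v l hne hY hl))
  have hXY : X (Y v) = 0 := by
    apply htop
    rw [h.xz, h.yz, hl]
    simp only [map_sub, map_smul]
    module
  have hZ : (-Z) (Y v) = (2 + l) • Y v := by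
    rw [LinearMap.neg_apply, h.yz, hl, map_smul]
    module
  rcases main_Y h.swap hs.swap hZ hXY hY with ⟨-, t, m, ht, htY, htZ⟩ | ⟨n, ε, hε, hi⟩
  · refine or_assoc.mp (Or.inl (caseY t (-m) ht htY ?_))
    rw [neg_smul, ← htZ]
    simp
  · exact Or.inr (Or.inr ⟨n, ε, hε, B_of_A hi⟩)
end

section
/- For every integer n ≥ 0, the formulas defining E_n give a well-defined U-module structure on the (2n+1)-dimensional ℂ-vector space with basis v₀,…,v_n, w₀,…,w_{n−1} (i.e., the three operators defined by the formulas satisfy the relations XZ + ZX = 2X, YZ + ZY = −2Y and X² − Y² = Z), and the resulting U-module E_n is simple. -/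
/-- The basis vector with index `i` (zero if `i` is out of range). -/
noncomputable def Eb (n i : ℕ) : Fin (2 * n + 1) → ℂ := fun r => if (r : ℕ) = i then 1 else 0

theorem Eb_single (n : ℕ) (i : Fin (2 * n + 1)) : Eb n i = Pi.single i 1 := by
  ext r
  simp [Eb, Pi.single_apply, Fin.ext_iff]

theorem toLin_Eb (n : ℕ) (M : Matrix (Fin (2 * n + 1)) (Fin (2 * n + 1)) ℂ) (i : ℕ)
    (hi : i < 2 * n + 1) : Matrix.toLin' M (Eb n i) = fun r => M r ⟨i, hi⟩ := by
  have h := Eb_single n ⟨i, hi⟩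
  simp only at h
  rw [h]
  ext r
  simp [Matrix.toLin'_apply]

theorem X_v (n k : ℕ) (hk : k ≤ n) :
    Matrix.toLin' (EmatX n) (Eb n k) = Eb n (n + 1 + k) := by
  rw [toLin_Eb n _ k (by omega)]
  ext r
  have h2 : ¬ (n + 1 ≤ k) := by omega
  simp [EmatX, Eb, hk, h2]

theorem X_w (n k : ℕ) (hk : k < n) :
    Matrix.toLin' (EmatX n) (Eb n (n + 1 + k)) =
      (2 * (n : ℂ) + k * (4 * n - 2 - 4 * k)) • Eb n k := by
  rw [toLin_Eb n _ _ (by omega)]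
  ext r
  have h2 : ¬ (n + 1 + k ≤ n) := by omega
  have h3 : (n + 1 + k = (r : ℕ) + (n + 1)) ↔ (r : ℕ) = k := by omega
  simp only [EmatX, Eb, h2, h3, Pi.smul_apply, smul_eq_mul]
  split_ifs <;> first | omega | (push_cast; ring)

theorem Y_v (n k : ℕ) (hk : k ≤ n) :
    Matrix.toLin' (EmatY n) (Eb n k) =
      ((k : ℂ) * (4 * n + 2 - 4 * k)) • Eb n (n + k) := by
  rw [toLin_Eb n _ _ (by omega)]
  ext r
  have h2 : ¬ (n + 1 ≤ k) := by omega
  rcases Nat.eq_zero_or_pos k with rfl | h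
  · simp [EmatY]
  · have h' : 1 ≤ k := h
    simp [EmatY, Eb, h2, hk, h']

theorem Y_w (n k : ℕ) (hk : k < n) :
    Matrix.toLin' (EmatY n) (Eb n (n + 1 + k)) = Eb n (k + 1) := by
  rw [toLin_Eb n _ _ (by omega)]
  ext r
  have h2 : ¬ (n + 1 + k ≤ n) := by omega
  have h3 : ((r : ℕ) + n = n + 1 + k) ↔ (r : ℕ) = k + 1 := by omega
  simp only [EmatY, Eb, h2, h3]
  split_ifs <;> first | omega | rfl

theorem Z_v (n k : ℕ) (hk : k ≤ n) :
    Matrix.toLin' (EmatZ n) (Eb n k) = (2 * (n : ℂ) - 4 * k) • Eb n k := by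
  rw [toLin_Eb n _ _ (by omega)]
  ext r
  simp only [EmatZ, Eb, Fin.ext_iff, Pi.smul_apply, smul_eq_mul]
  split_ifs with h1 h2
  · rw [h1]; ring
  · omega
  · ring

theorem Z_w (n k : ℕ) (hk : k < n) :
    Matrix.toLin' (EmatZ n) (Eb n (n + 1 + k)) =
      (4 * (k : ℂ) + 2 - 2 * n) • Eb n (n + 1 + k) := by
  rw [toLin_Eb n _ _ (by omega)]
  ext r
  simp only [EmatZ, Eb, Fin.ext_iff, Pi.smul_apply, smul_eq_mul]
  split_ifs with h1 h2
  · omega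
  · rw [h1]; push_cast; ring
  · ring

theorem Eb_out (n i : ℕ) (h : 2 * n + 1 ≤ i) : Eb n i = 0 := by
  ext r
  have : (r : ℕ) ≠ i := by omega
  simp [Eb, this]

/-- Two endomorphisms agreeing on all `v_k` and `w_k` are equal. -/
theorem E_ext (n : ℕ) (f g : (Fin (2 * n + 1) → ℂ) →ₗ[ℂ] (Fin (2 * n + 1) → ℂ))
    (hv : ∀ k, k ≤ n → f (Eb n k) = g (Eb n k))
    (hw : ∀ k, k < n → f (Eb n (n + 1 + k)) = g (Eb n (n + 1 + k))) : f = g := by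
  apply LinearMap.pi_ext'
  intro i
  apply LinearMap.ext_ring
  simp only [LinearMap.comp_apply, LinearMap.coe_single]
  rw [← Eb_single]
  by_cases h : (i : ℕ) ≤ n
  · exact hv _ h
  · obtain ⟨k, hk⟩ : ∃ k, (i : ℕ) = n + 1 + k := ⟨i - (n + 1), by omega⟩
    rw [hk]
    exact hw k (by omega)

/-- The eigenvalues of `Z`. -/
noncomputable def Ed (n : ℕ) (r : Fin (2 * n + 1)) : ℂ :=
  if (r : ℕ) ≤ n then 2 * (n : ℂ) - 4 * ((r : ℕ) : ℂ) else 4 * ((r : ℕ) : ℂ) - 6 * (n : ℂ) - 2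

theorem Ed_inj (n : ℕ) (i j : Fin (2 * n + 1)) (h : Ed n i = Ed n j) : i = j := by
  have hz : (if (i : ℕ) ≤ n then 2 * (n : ℤ) - 4 * (i : ℕ) else 4 * (i : ℕ) - 6 * (n : ℤ) - 2) =
      (if (j : ℕ) ≤ n then 2 * (n : ℤ) - 4 * (j : ℕ) else 4 * (j : ℕ) - 6 * (n : ℤ) - 2) := by
    unfold Ed at h
    split_ifs at h ⊢ <;> exact_mod_cast h
  apply Fin.ext
  split_ifs at hz <;> omega

theorem Z_apply (n : ℕ) (u : Fin (2 * n + 1) → ℂ) (r : Fin (2 * n + 1)) :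
    Matrix.toLin' (EmatZ n) u r = Ed n r * u r := by
  have : EmatZ n = Matrix.diagonal (Ed n) := by
    ext a b
    simp [EmatZ, Ed, Matrix.diagonal_apply]
  rw [this, Matrix.toLin'_apply, Matrix.mulVec_diagonal]

theorem E_isolate (n : ℕ) (W : Submodule ℂ (Fin (2 * n + 1) → ℂ))
    (hZ : ∀ w ∈ W, Matrix.toLin' (EmatZ n) w ∈ W) (u : Fin (2 * n + 1) → ℂ) (hu : u ∈ W)
    (i : Fin (2 * n + 1)) (hi : u i ≠ 0) (s : Finset (Fin (2 * n + 1))) (hs : i ∉ s) :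
    ∃ u' ∈ W, u' i ≠ 0 ∧ ∀ j ∈ s, u' j = 0 := by
  induction s using Finset.induction_on with
  | empty => exact ⟨u, hu, hi, by simp⟩
  | insert a s ha ih =>
    simp only [Finset.mem_insert, not_or] at hs
    obtain ⟨u', hW, h1, h2⟩ := ih hs.2
    refine ⟨Matrix.toLin' (EmatZ n) u' - Ed n a • u',
      W.sub_mem (hZ _ hW) (W.smul_mem _ hW), ?_, ?_⟩
    · rw [Pi.sub_apply, Z_apply, Pi.smul_apply, smul_eq_mul, ← sub_mul]
      exact mul_ne_zero (sub_ne_zero.2 fun h => hs.1 (Ed_inj n _ _ h)) h1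
    · intro j hj
      rw [Pi.sub_apply, Z_apply, Pi.smul_apply, smul_eq_mul, ← sub_mul]
      rcases Finset.mem_insert.1 hj with rfl | hj
      · simp
      · simp [h2 j hj]

theorem E_basis_mem (n : ℕ) (W : Submodule ℂ (Fin (2 * n + 1) → ℂ))
    (hZ : ∀ w ∈ W, Matrix.toLin' (EmatZ n) w ∈ W) (u : Fin (2 * n + 1) → ℂ) (hu : u ∈ W)
    (i : Fin (2 * n + 1)) (hi : u i ≠ 0) : Eb n i ∈ W := by
  obtain ⟨u', hW, h1, h2⟩ := E_isolate n W hZ u hu i hi (Finset.univ.erase i) (by simp)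
  have : Eb n i = (u' i)⁻¹ • u' := by
    rw [Eb_single]
    ext r
    by_cases h : r = i
    · subst h
      simp [h1]
    · simp [h, h2 r (by simp [h])]
  rw [this]
  exact W.smul_mem _ hW

theorem coefX_ne (n k : ℕ) (hk : k < n) : 2 * (n : ℂ) + k * (4 * n - 2 - 4 * k) ≠ 0 := by
  obtain ⟨m, rfl⟩ : ∃ m, n = k + 1 + m := ⟨n - (k + 1), by omega⟩
  have : 2 * ((k + 1 + m : ℕ) : ℂ) + k * (4 * ((k + 1 + m : ℕ) : ℂ) - 2 - 4 * k) =
      (((2 * k + 1) * (2 * (m + 1)) : ℕ) : ℂ) := by push_cast; ring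
  rw [this]
  exact Nat.cast_ne_zero.2 (by positivity)

theorem coefY_ne (n k : ℕ) (hk : k < n) :
    ((k + 1 : ℕ) : ℂ) * (4 * n + 2 - 4 * ((k + 1 : ℕ) : ℂ)) ≠ 0 := by
  obtain ⟨m, rfl⟩ : ∃ m, n = k + 1 + m := ⟨n - (k + 1), by omega⟩
  have : ((k + 1 : ℕ) : ℂ) * (4 * ((k + 1 + m : ℕ) : ℂ) + 2 - 4 * ((k + 1 : ℕ) : ℂ)) =
      (((k + 1) * (4 * m + 2) : ℕ) : ℂ) := by push_cast; ring
  rw [this]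
  exact Nat.cast_ne_zero.2 (by positivity)

theorem E_simple (n : ℕ) (W : Submodule ℂ (Fin (2 * n + 1) → ℂ))
    (hX : ∀ w ∈ W, Matrix.toLin' (EmatX n) w ∈ W)
    (hY : ∀ w ∈ W, Matrix.toLin' (EmatY n) w ∈ W)
    (hZ : ∀ w ∈ W, Matrix.toLin' (EmatZ n) w ∈ W) : W = ⊥ ∨ W = ⊤ := by
  rw [or_iff_not_imp_left]
  intro hne
  obtain ⟨u, hu, hu0⟩ := W.ne_bot_iff.1 hne
  obtain ⟨i, hi⟩ := Function.ne_iff.1 hu0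
  have hiW := E_basis_mem n W hZ u hu i hi
  have h1 : ∀ k, k < n → (Eb n k ∈ W ↔ Eb n (n + 1 + k) ∈ W) := by
    intro k hk
    constructor
    · intro h
      rw [← X_v n k hk.le]
      exact hX _ h
    · intro h
      have := hX _ h
      rw [X_w n k hk] at this
      exact (W.smul_mem_iff (coefX_ne n k hk)).1 this
  have h2 : ∀ k, k < n → (Eb n (n + 1 + k) ∈ W ↔ Eb n (k + 1) ∈ W) := by
    intro k hk
    constructor
    · intro h
      rw [← Y_w n k hk]
      exact hY _ h
    · intro h
      have := hY _ h
      rw [Y_v n (k + 1) hk] at this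
      have h3 := (W.smul_mem_iff (coefY_ne n k hk)).1 this
      rwa [show n + (k + 1) = n + 1 + k by omega] at h3
  have h3 : ∀ k, k ≤ n → (Eb n k ∈ W ↔ Eb n 0 ∈ W) := by
    intro k
    induction k with
    | zero => simp
    | succ k ih =>
      intro hk
      rw [← h2 k hk, ← h1 k hk]
      exact ih (by omega)
  have h4 : ∀ j : Fin (2 * n + 1), (Eb n j ∈ W ↔ Eb n 0 ∈ W) := by
    intro j
    by_cases h : (j : ℕ) ≤ n
    · exact h3 _ h
    · obtain ⟨k, hk⟩ : ∃ k, (j : ℕ) = n + 1 + k := ⟨j - (n + 1), by omega⟩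
      rw [hk, ← h1 k (by omega)]
      exact h3 k (by omega)
  rw [eq_top_iff]
  intro x _
  rw [pi_eq_sum_univ' x]
  refine W.sum_mem fun j _ => W.smul_mem _ ?_
  have h5 := (h4 j).2 ((h4 i).1 hiW)
  rw [Eb_single] at h5
  exact h5

/-- for every `n ≥ 0` the formulas defining `E_n` give a well-defined
module structure over `U = ℂ⟨X,Y,Z⟩/(XZ+ZX−2X, YZ+ZY+2Y, X²−Y²−Z)` on the
`(2n+1)`-dimensional space, and the resulting `U`-module `E_n` is simple. -/
theorem En_well_defined_and_simple (n : ℕ) :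
    (Matrix.toLin' (EmatX n) * Matrix.toLin' (EmatZ n) +
        Matrix.toLin' (EmatZ n) * Matrix.toLin' (EmatX n) =
      (2 : ℂ) • Matrix.toLin' (EmatX n)) ∧
    (Matrix.toLin' (EmatY n) * Matrix.toLin' (EmatZ n) +
        Matrix.toLin' (EmatZ n) * Matrix.toLin' (EmatY n) =
      (-2 : ℂ) • Matrix.toLin' (EmatY n)) ∧
    (Matrix.toLin' (EmatX n) * Matrix.toLin' (EmatX n) -
        Matrix.toLin' (EmatY n) * Matrix.toLin' (EmatY n) =
      Matrix.toLin' (EmatZ n)) ∧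
    ∀ W : Submodule ℂ (Fin (2 * n + 1) → ℂ),
      (∀ w ∈ W, Matrix.toLin' (EmatX n) w ∈ W) →
      (∀ w ∈ W, Matrix.toLin' (EmatY n) w ∈ W) →
      (∀ w ∈ W, Matrix.toLin' (EmatZ n) w ∈ W) →
      W = ⊥ ∨ W = ⊤ := by
  refine ⟨?_, ?_, ?_, fun W hX hY hZ => E_simple n W hX hY hZ⟩
  · apply E_ext
    · intro k hk
      simp only [LinearMap.add_apply, Module.End.mul_apply, LinearMap.smul_apply]
      rw [Z_v n k hk, map_smul, X_v n k hk]
      rcases hk.lt_or_eq with h | rfl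
      · rw [Z_w n k h]
        module
      · rw [Eb_out _ _ (by omega)]
        simp
    · intro k hk
      simp only [LinearMap.add_apply, Module.End.mul_apply, LinearMap.smul_apply]
      rw [Z_w n k hk, map_smul, X_w n k hk, map_smul, Z_v n k hk.le]
      module
  · apply E_ext
    · intro k hk
      simp only [LinearMap.add_apply, Module.End.mul_apply, LinearMap.smul_apply]
      rw [Z_v n k hk, map_smul, Y_v n k hk, map_smul]
      rcases k with _ | k
      · simp
      · rw [show n + (k + 1) = n + 1 + k by omega, Z_w n k hk]
        push_cast
        module
    · intro k hk
      simp only [LinearMap.add_apply, Module.End.mul_apply, LinearMap.smul_apply]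
      rw [Z_w n k hk, map_smul, Y_w n k hk, Z_v n (k + 1) hk]
      push_cast
      module
  · apply E_ext
    · intro k hk
      simp only [LinearMap.sub_apply, Module.End.mul_apply]
      have hYY : Matrix.toLin' (EmatY n) (Matrix.toLin' (EmatY n) (Eb n k)) =
          ((k : ℂ) * (4 * n + 2 - 4 * k)) • Eb n k := by
        rw [Y_v n k hk, map_smul]
        rcases k with _ | k
        · simp
        · rw [show n + (k + 1) = n + 1 + k by omega, Y_w n k hk]
      rw [hYY, Z_v n k hk, X_v n k hk]
      rcases hk.lt_or_eq with h | rfl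
      · rw [X_w n k h]
        module
      · rw [Eb_out _ _ (by omega), map_zero]
        module
    · intro k hk
      simp only [LinearMap.sub_apply, Module.End.mul_apply]
      rw [X_w n k hk, map_smul, X_v n k hk.le, Y_w n k hk, Y_v n (k + 1) hk,
        show n + (k + 1) = n + 1 + k by omega, Z_w n k hk]
      push_cast
      module
end
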